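/- arXiv:1903.00813 — 4 statements merged into one kernel-verified Lean document; each statement's English description precedes it below -/
import Mathlib

section
/- Fix integers d ≥ 1 and p ≥ 2, and let s > 0 be the smallest positive real number with q_{d,p}'(s) = 0. Then the growth-rate limit G_{d,p} = lim_{m→∞} C_{d,p}((m+1)(p−1)+1) / C_{d,p}(m(p−1)+1) exists and equals 1 / q_{d,p}(s)^{p−1}. -/
open Filter

def ee (p k : ℕ) : ℕ := ∑ i ∈ Finset.range k, p ^ i

lemma ee_succ (p k : ℕ) : ee p (k+1) = ee p k + p ^ k := by
  simp [ee, Finset.sum_range_succ]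

lemma ee_zero (p : ℕ) : ee p 0 = 0 := by simp [ee]

lemma ee_one (p : ℕ) : ee p 1 = 1 := by simp [ee]

lemma ee_pow (p k : ℕ) (hp : 2 ≤ p) : p ^ k = (p - 1) * ee p k + 1 := by
  obtain ⟨a, rfl⟩ : ∃ a, p = a + 1 := ⟨p - 1, by omega⟩
  induction k with
  | zero => simp [ee]
  | succ k ih =>
    rw [ee_succ, pow_succ, Nat.add_sub_cancel] at *
    have h := ih
    calc (a+1)^k * (a+1) = a * (a+1)^k + (a+1)^k := by ring
      _ = a * (a+1)^k + (a * ee (a+1) k + 1) := by rw [← h]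
      _ = _ := by ring

lemma alt_sum (N : ℕ) : ∀ b : ℕ → ℝ, (∀ k, 0 ≤ b k) → (∀ k, b (k+1) ≤ b k) →
    0 ≤ ∑ k ∈ Finset.range N, (-1:ℝ)^k * b k ∧ ∑ k ∈ Finset.range N, (-1:ℝ)^k * b k ≤ b 0 := by
  induction N with
  | zero => intro b h0 _; simpa using h0 0
  | succ N ih =>
    intro b h0 h1
    obtain ⟨h2, h3⟩ := ih (fun k => b (k+1)) (fun k => h0 _) (fun k => h1 _)
    rw [Finset.sum_range_succ']
    have : ∑ k ∈ Finset.range N, (-1:ℝ)^(k+1) * b (k+1) = - ∑ k ∈ Finset.range N, (-1:ℝ)^k * b (k+1) := by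
      rw [← Finset.sum_neg_distrib]; refine Finset.sum_congr rfl fun k _ => by ring
    rw [this]
    have := h1 0
    simp only [zero_add] at *
    constructor <;> simp <;> linarith

lemma exists_u (d p : ℕ) (hp : 2 ≤ p) : ∃ u : ℕ → ℝ, ∀ n,
    ∑ k ∈ Finset.range (d+1), (-1:ℝ)^k * (d.choose k) * (if ee p k ≤ n then u (n - ee p k) else 0)
      = if n = 0 then 1 else 0 := by
  let A : PowerSeries ℝ := ∑ k ∈ Finset.range (d+1),
    PowerSeries.C ((-1:ℝ)^k * (d.choose k)) * PowerSeries.X ^ (ee p k)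
  have key : ∀ (B : PowerSeries ℝ) n, PowerSeries.coeff n (A * B) =
      ∑ k ∈ Finset.range (d+1), (-1:ℝ)^k * (d.choose k) *
        (if ee p k ≤ n then PowerSeries.coeff (n - ee p k) B else 0) := by
    intro B n
    simp only [A, Finset.sum_mul, map_sum]
    refine Finset.sum_congr rfl fun k _ => ?_
    rw [mul_assoc, PowerSeries.coeff_C_mul, PowerSeries.coeff_X_pow_mul']
  have hA : PowerSeries.constantCoeff A ≠ 0 := by
    have := key 1 0
    rw [mul_one, Finset.sum_range_succ'] at this
    rw [← PowerSeries.coeff_zero_eq_constantCoeff_apply, this, Finset.sum_eq_zero]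
    · simp [ee_zero]
    · intro k _
      have : ¬ (ee p (k+1) ≤ 0) := by
        rw [ee_succ]; have : 0 < p^k := by positivity
        omega
      simp only [this, if_false, mul_zero]
  refine ⟨fun n => PowerSeries.coeff n A⁻¹, fun n => ?_⟩
  rw [← key, PowerSeries.mul_inv_cancel _ hA, PowerSeries.coeff_one]

lemma u_props (d p : ℕ) (hd : 1 ≤ d) (hp : 2 ≤ p) (u : ℕ → ℝ) (hu : ∀ n,
    ∑ k ∈ Finset.range (d+1), (-1:ℝ)^k * (d.choose k) * (if ee p k ≤ n then u (n - ee p k) else 0)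
      = if n = 0 then 1 else 0) :
    u 0 = 1 ∧ u 1 = d ∧ ∀ n, 0 < u n ∧ u (n+1) ≤ d * u n := by
  have hepos : ∀ k, 0 < ee p (k+1) := fun k => by
    rw [ee_succ]; have : 0 < p^k := by positivity
    omega
  have hu0 : u 0 = 1 := by
    have := hu 0
    rw [Finset.sum_range_succ', Finset.sum_eq_zero] at this
    · simpa [ee_zero] using this
    · intro k _
      have : ¬ (ee p (k+1) ≤ 0) := by have := hepos k; omega
      simp only [this, if_false, mul_zero]
  set l : ℝ := ((d:ℝ)+1)/2 with hl
  have hd' : (1:ℝ) ≤ d := by exact_mod_cast hd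
  have hl1 : 1 ≤ l := by rw [hl]; linarith
  let U : ℕ → ℕ → ℝ := fun n k => if ee p k ≤ n then u (n - ee p k) else 0
  -- step
  have step : ∀ n, (∀ j ≤ n, 0 < u j) → (∀ j < n, l * u j ≤ u (j+1)) →
      u (n+1) ≤ d * u n ∧ l * u n ≤ u (n+1) := by
    intro n hpos hmono
    have hUnn : ∀ k, 0 ≤ U (n+1) (k+1) := by
      intro k
      simp only [U]
      split_ifs with h
      · exact (hpos _ (by have := hepos k; omega)).le
      · exact le_rfl
    have hgrow : ∀ i j, j + i ≤ n → l^i * u j ≤ u (j+i) := by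
      intro i
      induction i with
      | zero => intro j _; simp
      | succ i ih =>
        intro j hj
        have h1 := ih j (by omega)
        have h2 := hmono (j+i) (by omega)
        calc l^(i+1) * u j = l * (l^i * u j) := by ring
          _ ≤ l * u (j+i) := by gcongr
          _ ≤ _ := h2
    have hU2 : ∀ k, l^2 * U (n+1) (k+2) ≤ U (n+1) (k+1) := by
      intro k
      by_cases h : ee p (k+2) ≤ n+1
      · have e1 : ee p (k+2) = ee p (k+1) + p^(k+1) := ee_succ p (k+1)
        have hpk : 2 ≤ p^(k+1) := by
          calc 2 ≤ p := hp
            _ = p^1 := (pow_one p).symm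
            _ ≤ p^(k+1) := Nat.pow_le_pow_right (by omega) (by omega)
        have h' : ee p (k+1) ≤ n+1 := by omega
        simp only [U, h, h', if_true]
        have h3 := hgrow (p^(k+1)) (n+1 - ee p (k+2)) (by have := hepos k; omega)
        have h4 : n + 1 - ee p (k+2) + p^(k+1) = n+1 - ee p (k+1) := by omega
        rw [h4] at h3
        refine le_trans ?_ h3
        have := (hpos (n+1 - ee p (k+2)) (by have := hepos (k+1); omega)).le
        gcongr
      · have := hUnn k
        have h5 : U (n+1) (k+2) = 0 := by simp [U, h]
        rw [h5]; simpa using this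
    have hch : ∀ k, (d.choose (k+2) : ℝ) ≤ d.choose (k+1) * l^2 := by
      intro k
      have h1 : (d.choose (k+2) : ℝ) * (k+2) = d.choose (k+1) * ((d - (k+1) : ℕ) : ℝ) := by
        have := Nat.choose_succ_right_eq d (k+1)
        exact_mod_cast this
      have h2 : ((d - (k+1) : ℕ) : ℝ) ≤ d - 1 := by
        rw [← Nat.cast_pred (by omega)]
        exact_mod_cast (by omega)
      have h3 : (0:ℝ) ≤ d.choose (k+1) := by positivity
      have h4 : (0:ℝ) ≤ d.choose (k+2) := by positivity
      have h5 : (d.choose (k+2) : ℝ) * 2 ≤ d.choose (k+1) * (d - 1) := by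
        calc (d.choose (k+2) : ℝ) * 2 ≤ d.choose (k+2) * (k+2) := by
              gcongr; have : (0:ℝ) ≤ k := by positivity
              linarith
          _ ≤ _ := by rw [h1]; gcongr
      have h6 : ((d:ℝ) - 1)/2 ≤ l^2 := by rw [hl]; nlinarith
      calc (d.choose (k+2) : ℝ) ≤ d.choose (k+1) * ((d - 1)/2) := by linarith
        _ ≤ _ := by gcongr
    let a : ℕ → ℝ := fun k => d.choose (k+1) * U (n+1) (k+1)
    have ha0 : ∀ k, 0 ≤ a k := fun k => mul_nonneg (by positivity) (hUnn k)
    have ha1 : ∀ k, a (k+1) ≤ a k := by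
      intro k
      calc a (k+1) = d.choose (k+2) * U (n+1) (k+2) := rfl
        _ ≤ (d.choose (k+1) * l^2) * U (n+1) (k+2) := by
            have := hUnn (k+1); gcongr; exact hch k
        _ = d.choose (k+1) * (l^2 * U (n+1) (k+2)) := by ring
        _ ≤ _ := by have := hU2 k; simp only [a]; gcongr
    have hrec : u (n+1) = ∑ k ∈ Finset.range d, (-1:ℝ)^k * a k := by
      have h2 : ∑ k ∈ Finset.range d, (-1:ℝ)^(k+1) * (d.choose (k+1)) * (if ee p (k+1) ≤ n+1 then u (n+1 - ee p (k+1)) else 0) = - ∑ k ∈ Finset.range d, (-1:ℝ)^k * a k := by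
        rw [← Finset.sum_neg_distrib]
        refine Finset.sum_congr rfl fun k _ => ?_
        simp only [a, U]; ring
      have h3 : ∑ k ∈ Finset.range d, (-1:ℝ)^(k+1) * (d.choose (k+1)) * (if ee p (k+1) ≤ n+1 then u (n+1 - ee p (k+1)) else 0) + u (n+1) = 0 := by
        have h4 := hu (n+1)
        rw [Finset.sum_range_succ'] at h4
        simpa [ee_zero] using h4
      linarith
    have ha00 : a 0 = d * u n := by simp [a, U, ee_one]
    have hA := alt_sum d a ha0 ha1
    refine ⟨by rw [hrec, ← ha00]; exact hA.2, ?_⟩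
    have hlow : a 0 - a 1 ≤ u (n+1) := by
      rw [hrec]
      obtain ⟨e, rfl⟩ : ∃ e, d = e + 1 := ⟨d - 1, by omega⟩
      rw [Finset.sum_range_succ']
      have h := (alt_sum e (fun k => a (k+1)) (fun k => ha0 _) (fun k => ha1 _)).2
      have h2 : ∑ k ∈ Finset.range e, (-1:ℝ)^(k+1) * a (k+1) = - ∑ k ∈ Finset.range e, (-1:ℝ)^k * a (k+1) := by
        rw [← Finset.sum_neg_distrib]; refine Finset.sum_congr rfl fun k _ => by ring
      rw [h2]; simp at h ⊢; linarith
    have ha1' : l^2 * a 1 ≤ (d * (d-1)/2) * u n := by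
      have h1 := hU2 0
      have h2 : U (n+1) 1 = u n := by simp [U, ee_one]
      simp only [zero_add] at h1
      rw [h2] at h1
      have h3 : (d.choose 2 : ℝ) = d * (d-1)/2 := Nat.cast_choose_two ℝ d
      simp only [a]
      rw [← h3]
      calc l^2 * ((d.choose (1+1) : ℝ) * U (n+1) (1+1)) = d.choose 2 * (l^2 * U (n+1) 2) := by norm_num; ring
        _ ≤ _ := by gcongr
    have hun := hpos n le_rfl
    have hl2 : (d * (d-1)/2) ≤ l^2 * (d - l) := by
      rw [hl]
      have : ((d:ℝ)+1)^2 ≥ 4 * d := by nlinarith [sq_nonneg ((d:ℝ)-1)]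
      nlinarith [mul_nonneg (sub_nonneg.2 hd') (sub_nonneg.2 this)]
    have h7 : l^2 * a 1 ≤ l^2 * ((d - l) * u n) := by
      refine ha1'.trans ?_
      rw [← mul_assoc]; gcongr
    have h8 : a 1 ≤ (d-l) * u n := le_of_mul_le_mul_left h7 (by positivity)
    rw [ha00] at hlow
    linarith
  have main : ∀ n, (∀ j ≤ n, 0 < u j) ∧ (∀ j < n, l * u j ≤ u (j+1)) := by
    intro n
    induction n with
    | zero => exact ⟨fun j hj => by rw [Nat.le_zero.1 hj, hu0]; norm_num, fun j hj => by omega⟩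
    | succ n ih =>
      have h := (step n ih.1 ih.2).2
      have h0 := ih.1 n le_rfl
      have h1 : 0 < u (n+1) := lt_of_lt_of_le (by positivity) h
      refine ⟨fun j hj => ?_, fun j hj => ?_⟩
      · rcases Nat.lt_or_ge j (n+1) with h' | h'
        · exact ih.1 j (by omega)
        · rwa [show j = n+1 by omega]
      · rcases Nat.lt_or_ge j n with h' | h'
        · exact ih.2 j h'
        · rwa [show j = n by omega]
  refine ⟨hu0, ?_, fun n => ⟨(main n).1 n le_rfl, (step n (main n).1 (main n).2).1⟩⟩
  have := hu 1
  rw [Finset.sum_range_succ', Finset.sum_eq_single_of_mem 0 (Finset.mem_range.2 hd)] at this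
  · simp [ee_one, ee_zero, hu0] at this; linarith
  · intro k _ hk
    have : ¬ (ee p (k+1) ≤ 1) := by
      obtain ⟨j, rfl⟩ : ∃ j, k = j+1 := ⟨k-1, by omega⟩
      rw [ee_succ]; have := hepos j
      have : 0 < p^(j+1) := by positivity
      omega
    simp only [this, if_false, mul_zero]

/-- The reduced polynomial. -/
def QQ {K : Type*} [Field K] (d p : ℕ) (w : K) : K :=
  ∑ k ∈ Finset.range (d+1), (-1:K)^k * (d.choose k) * w ^ (ee p k)

lemma QQ_ofReal (d p : ℕ) (x : ℝ) : ((QQ d p x : ℝ) : ℂ) = QQ d p (x:ℂ) := by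
  simp [QQ]

lemma QQ_zero {K : Type*} [Field K] (d p : ℕ) (hp : 2 ≤ p) : QQ d p (0:K) = 1 := by
  rw [QQ, Finset.sum_range_succ', Finset.sum_eq_zero]
  · simp [ee_zero]
  · intro k _
    have : ee p (k+1) ≠ 0 := by
      rw [ee_succ]; have : 0 < p^k := by positivity
      omega
    simp [this]

lemma QQ_diff (d p : ℕ) : Differentiable ℂ (QQ d p : ℂ → ℂ) := by
  unfold QQ; fun_prop

/-- Series property. -/
def IsU (d p : ℕ) (u : ℕ → ℝ) : Prop := ∀ n,
    ∑ k ∈ Finset.range (d+1), (-1:ℝ)^k * (d.choose k) * (if ee p k ≤ n then u (n - ee p k) else 0)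
      = if n = 0 then 1 else 0

lemma near_sum (d p : ℕ) (u : ℕ → ℝ) (hu : IsU d p u) (z : ℂ)
    (hz : Summable (fun n => (u n : ℂ) * z ^ n)) :
    HasSum (fun n => (u n : ℂ) * z ^ n) (QQ d p z)⁻¹ := by
  obtain ⟨S, hS⟩ := hz
  have h1 : ∀ e : ℕ, HasSum (fun n => if e ≤ n then (u (n - e) : ℂ) * z ^ n else 0) (z^e * S) := by
    intro e
    have h := hS.mul_left (z^e)
    have hinj : Function.Injective (fun n : ℕ => n + e) := add_left_injective e
    rw [← hinj.hasSum_iff]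
    · have e2 : ((fun n => if e ≤ n then (u (n - e) : ℂ) * z ^ n else 0) ∘ fun n => n + e)
          = fun n => z^e * ((u n : ℂ) * z^n) := by
        funext n
        simp only [Function.comp, Nat.le_add_left, if_true, Nat.add_sub_cancel, pow_add]; ring
      rw [e2]; exact h
    · intro x hx
      have : ¬ e ≤ x := fun h => hx ⟨x - e, by simp; omega⟩
      simp [this]
  have h2 : HasSum (fun n => ∑ k ∈ Finset.range (d+1), ((-1:ℂ)^k * (d.choose k)) *
      (if ee p k ≤ n then (u (n - ee p k) : ℂ) * z ^ n else 0))
      (∑ k ∈ Finset.range (d+1), ((-1:ℂ)^k * (d.choose k)) * (z ^ (ee p k) * S)) :=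
    hasSum_sum fun k _ => (h1 (ee p k)).mul_left _
  have h3 : (fun n => ∑ k ∈ Finset.range (d+1), ((-1:ℂ)^k * (d.choose k)) *
      (if ee p k ≤ n then (u (n - ee p k) : ℂ) * z ^ n else 0)) = fun n => if n = 0 then (1:ℂ) else 0 := by
    funext n
    have := congrArg (fun x : ℝ => (x:ℂ) * z^n) (hu n)
    simp only [Complex.ofReal_sum, Finset.sum_mul] at this
    rw [show (if n = 0 then (1:ℂ) else 0) = (((if n = 0 then (1:ℝ) else 0):ℝ):ℂ) * z^n by
      split_ifs with h <;> simp [h], ← this]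
    refine Finset.sum_congr rfl fun k _ => ?_
    split_ifs <;> simp
    ring
  rw [h3] at h2
  have h4 := h2.unique (hasSum_ite_eq 0 (1:ℂ))
  have h5 : QQ d p z * S = 1 := by
    rw [← h4, QQ, Finset.sum_mul]
    refine Finset.sum_congr rfl fun k _ => by ring
  rwa [inv_eq_of_mul_eq_one_right h5]

lemma ball_sum (d p : ℕ) (hd : 1 ≤ d) (hp : 2 ≤ p) (u : ℕ → ℝ) (hu : IsU d p u) (R : ℝ)
    (hR : ∀ w : ℂ, ‖w‖ < R → QQ d p w ≠ 0) (z : ℂ) (hz : ‖z‖ < R) :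
    HasSum (fun n => (u n : ℂ) * z ^ n) (QQ d p z)⁻¹ := by
  obtain ⟨hu0, hu1, hun⟩ := u_props d p hd hp u hu
  have hub : ∀ n, u n ≤ (d:ℝ)^n := by
    intro n
    induction n with
    | zero => simp [hu0]
    | succ n ih => calc _ ≤ _ := (hun n).2
                    _ ≤ d * (d:ℝ)^n := by gcongr
                    _ = _ := by ring
  have hd' : (0:ℝ) < d := by exact_mod_cast hd
  have hA : HasFPowerSeriesAt (fun z => (QQ d p z : ℂ)⁻¹)
      (FormalMultilinearSeries.ofScalars ℂ (fun n => (u n : ℂ))) 0 := by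
    rw [hasFPowerSeriesAt_iff]
    filter_upwards [Metric.ball_mem_nhds (0:ℂ) (inv_pos.2 hd')] with w hw
    rw [mem_ball_zero_iff] at hw
    simp only [FormalMultilinearSeries.coeff_ofScalars, smul_eq_mul, zero_add]
    simp_rw [mul_comm (w ^ _)]
    apply near_sum d p u hu
    have hlt : d * ‖w‖ < 1 := by
      have := mul_lt_mul_of_pos_left hw hd'
      rwa [mul_inv_cancel₀ hd'.ne'] at this
    refine Summable.of_norm_bounded (summable_geometric_of_lt_one (by positivity) hlt) fun n => ?_
    rw [norm_mul, norm_pow, Complex.norm_real, Real.norm_of_nonneg (hun n).1.le, mul_pow]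
    gcongr
    exact hub n
  obtain ⟨R', h1, h2⟩ := exists_between hz
  have hR'0 : 0 < R' := lt_of_le_of_lt (norm_nonneg _) h1
  lift R' to NNReal using hR'0.le
  have hB := DifferentiableOn.hasFPowerSeriesOnBall (R := R') (c := 0) (f := fun z => (QQ d p z : ℂ)⁻¹)
    (fun w hw => ((QQ_diff d p w).inv (hR w (by
      rw [mem_closedBall_zero_iff] at hw; linarith))).differentiableWithinAt) (by exact_mod_cast hR'0)
  have hC := hB.hasFPowerSeriesAt.eq_formalMultilinearSeries hA
  rw [hC] at hB
  have := hB.hasSum (y := z) (by simpa [← ofReal_norm] using h1)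
  simpa [FormalMultilinearSeries.ofScalars_apply_eq, mul_comm] using this

lemma norm_bound_aux (d p : ℕ) (hd : 1 ≤ d) (hp : 2 ≤ p) (u : ℕ → ℝ) (hu : IsU d p u) (R : ℝ)
    (hR : ∀ w : ℂ, ‖w‖ < R → QQ d p w ≠ 0) (z : ℂ) (hz : ‖z‖ < R) :
    HasSum (fun n => u n * ‖z‖ ^ n) (QQ d p ‖z‖)⁻¹ := by
  have := ball_sum d p hd hp u hu R hR (‖z‖ : ℂ) (by simpa using hz)
  rw [← QQ_ofReal, ← Complex.ofReal_inv] at this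
  exact_mod_cast this

lemma no_roots (d p : ℕ) (hd : 1 ≤ d) (hp : 2 ≤ p) (r : ℝ)
    (hr : ∀ x : ℝ, 0 ≤ x → x ≤ r → 0 < QQ d p x) (w : ℂ) (hw : ‖w‖ ≤ r) : QQ d p w ≠ 0 := by
  intro h0
  obtain ⟨u, hu⟩ := exists_u d p hp
  obtain ⟨hu0, hu1, hun⟩ := u_props d p hd hp u hu
  have hc : IsCompact (Metric.closedBall (0:ℂ) r ∩ {w | QQ d p w = 0}) :=
    (isCompact_closedBall 0 r).inter_right (isClosed_singleton.preimage (QQ_diff d p).continuous)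
  obtain ⟨w0, ⟨hw0r, hw0⟩, hmin⟩ := hc.exists_isMinOn ⟨w, by simpa using hw, h0⟩ continuous_norm.continuousOn
  rw [mem_closedBall_zero_iff] at hw0r
  have hR : ∀ w : ℂ, ‖w‖ < ‖w0‖ → QQ d p w ≠ 0 := by
    intro w1 h1 h2
    have := hmin (a := w1) ⟨by rw [mem_closedBall_zero_iff]; linarith, h2⟩
    simp at this; linarith
  have hle : ∀ᶠ t : ℝ in nhdsWithin 1 (Set.Iio 1), QQ d p (t * ‖w0‖) ≤ ‖QQ d p ((t:ℂ) * w0)‖ := by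
    have : Set.Ioo (0:ℝ) 1 ∈ nhdsWithin (1:ℝ) (Set.Iio 1) := Ioo_mem_nhdsLT (by norm_num)
    have hw00 : 0 < ‖w0‖ := by
      rw [norm_pos_iff]; rintro rfl
      rw [Set.mem_ofPred_eq, QQ_zero d p hp] at hw0
      exact one_ne_zero hw0
    filter_upwards [this] with t ht
    have hn : ‖(t:ℂ) * w0‖ = t * ‖w0‖ := by simp [abs_of_pos ht.1]
    have hlt : ‖(t:ℂ) * w0‖ < ‖w0‖ := by rw [hn]; nlinarith [ht.2]
    have h1 := ball_sum d p hd hp u hu _ hR _ hlt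
    have h2 := norm_bound_aux d p hd hp u hu _ hR _ hlt
    have h3 : ‖(QQ d p ((t:ℂ) * w0))⁻¹‖ ≤ (QQ d p ‖(t:ℂ) * w0‖)⁻¹ := by
      rw [← h1.tsum_eq]
      refine tsum_of_norm_bounded h2 fun n => ?_
      rw [norm_mul, norm_pow, Complex.norm_real, Real.norm_of_nonneg (hun n).1.le]
    rw [hn, norm_inv] at h3
    have h4 : 0 < QQ d p (t * ‖w0‖) := hr _ (by have := ht.1; positivity) (by nlinarith [ht.2])
    have h5 : 0 < ‖QQ d p ((t:ℂ) * w0)‖ := norm_pos_iff.2 (hR _ hlt)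
    exact (inv_le_inv₀ h5 h4).1 h3
  have hl1 : Tendsto (fun t : ℝ => QQ d p (t * ‖w0‖)) (nhdsWithin 1 (Set.Iio 1)) (nhds (QQ d p (1 * ‖w0‖))) := by
    have : Continuous (fun t : ℝ => QQ d p (t * ‖w0‖)) := by unfold QQ; fun_prop
    exact this.continuousAt.tendsto.mono_left nhdsWithin_le_nhds
  have hl2 : Tendsto (fun t : ℝ => ‖QQ d p ((t:ℂ) * w0)‖) (nhdsWithin 1 (Set.Iio 1)) (nhds ‖QQ d p (((1:ℝ):ℂ) * w0)‖) := by
    have : Continuous (fun t : ℝ => ‖QQ d p ((t:ℂ) * w0)‖) := by unfold QQ; fun_prop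
    exact this.continuousAt.tendsto.mono_left nhdsWithin_le_nhds
  have := le_of_tendsto_of_tendsto hl1 hl2 hle
  rw [Set.mem_ofPred_eq] at hw0
  simp [hw0] at this
  have := hr ‖w0‖ (norm_nonneg _) hw0r
  linarith

lemma norm_bound (d p : ℕ) (hd : 1 ≤ d) (hp : 2 ≤ p) (r : ℝ) (hr0 : 0 < r)
    (hr : ∀ x : ℝ, 0 ≤ x → x ≤ r → 0 < QQ d p x) :
    ∃ ε > 0, ∀ θ : ℝ, |θ| ≤ Real.pi →
      ‖(QQ d p (r * Complex.exp (θ * Complex.I)))⁻¹‖ ≤ (QQ d p r)⁻¹ * Real.exp (-ε * θ^2) := by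
  obtain ⟨u, hu⟩ := exists_u d p hp
  obtain ⟨hu0, hu1, hun⟩ := u_props d p hd hp u hu
  have hd' : (0:ℝ) < d := by exact_mod_cast hd
  obtain ⟨δ, hδ, hsub⟩ := (isCompact_closedBall (0:ℂ) r).exists_thickening_subset_open
    (isOpen_ne.preimage (QQ_diff d p).continuous) (fun w hw => no_roots d p hd hp r hr w (by simpa using hw))
  have hR : ∀ w : ℂ, ‖w‖ < r + δ → QQ d p w ≠ 0 := by
    intro w hw
    apply hsub
    rw [thickening_closedBall hδ hr0.le, mem_ball_zero_iff]
    linarith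
  have hQ : 0 < QQ d p r := hr r hr0.le le_rfl
  set a : ℝ := d * r with ha
  have hapos : 0 < a := by positivity
  -- c : the multiplier
  set c : ℝ := a / (1 + a) * (2 / Real.pi^2) with hc
  have hcpos : 0 < c := by have := Real.pi_pos; positivity
  refine ⟨c * QQ d p r, by positivity, fun θ hθ => ?_⟩
  set w : ℂ := r * Complex.exp (θ * Complex.I) with hw
  have hwn : ‖w‖ = r := by
    rw [hw, norm_mul, Complex.norm_exp_ofReal_mul_I, Complex.norm_real, Real.norm_of_nonneg hr0.le, mul_one]
  have hlt : ‖w‖ < r + δ := by linarith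
  have h1 := ball_sum d p hd hp u hu _ hR _ hlt
  have h2 := norm_bound_aux d p hd hp u hu _ hR _ hlt
  rw [hwn] at h2
  have h1' := (hasSum_nat_add_iff' 2).2 h1
  have h2' := (hasSum_nat_add_iff' 2).2 h2
  simp [Finset.sum_range_succ, hu0, hu1] at h1' h2'
  have h3 : ‖(QQ d p w)⁻¹ - (1 + d * w)‖ ≤ (QQ d p r)⁻¹ - (1 + d * r) := by
    rw [← h1'.tsum_eq]
    refine tsum_of_norm_bounded h2' fun n => ?_
    rw [norm_mul, norm_pow, Complex.norm_real, Real.norm_of_nonneg (hun _).1.le, hwn]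
  have h4 : ‖(1 + d * w : ℂ)‖ ≤ 1 + a - c * θ^2 := by
    have hcos := Real.cos_le_one_sub_mul_cos_sq hθ
    have e1 : ‖(1 + d * w : ℂ)‖^2 = (1+a)^2 - 2 * a * (1 - Real.cos θ) := by
      rw [← Complex.normSq_eq_norm_sq, Complex.normSq_apply, hw]
      simp [Complex.exp_ofReal_mul_I_re, Complex.exp_ofReal_mul_I_im]
      rw [ha]
      nlinarith [Real.sin_sq_add_cos_sq θ]
    have e2 : c * θ^2 ≤ a/(1+a) * (1 - Real.cos θ) := by
      rw [hc, mul_assoc]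
      gcongr
      linarith
    have e3 : ‖(1 + d * w : ℂ)‖ ≤ 1 + a - a/(1+a) * (1 - Real.cos θ) := by
      apply abs_le_of_sq_le_sq' _ _ |>.2
      · rw [e1]
        have : (1+a) * (a/(1+a)) = a := by field_simp
        nlinarith [sq_nonneg (a/(1+a) * (1 - Real.cos θ))]
      · have h6 : a/(1+a) * (1 - Real.cos θ) ≤ a/(1+a) * 2 := by
          gcongr; linarith [Real.neg_one_le_cos θ]
        have h7 : a/(1+a) * 2 ≤ 1 + a := by
          rw [div_mul_eq_mul_div, div_le_iff₀ (by positivity)]; nlinarith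
        linarith
    linarith
  have h5 : ‖(QQ d p w)⁻¹‖ ≤ (QQ d p r)⁻¹ - c * θ^2 := by
    calc ‖(QQ d p w)⁻¹‖ = ‖((QQ d p w)⁻¹ - (1 + d * w)) + (1 + d * w)‖ := by ring_nf
      _ ≤ _ := norm_add_le _ _
      _ ≤ _ := by linarith
  refine h5.trans ?_
  have h6 := Real.add_one_le_exp (-(c * QQ d p r) * θ^2)
  calc (QQ d p r)⁻¹ - c * θ^2 = (QQ d p r)⁻¹ * (-(c * QQ d p r) * θ^2 + 1) := by field_simp; ring
    _ ≤ _ := by gcongr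

open Polynomial in
lemma lagrange_poly (q B : ℂ[X]) (hqB : q = X * B) (hB0 : B.eval 0 ≠ 0)
    (y : PowerSeries ℂ) (h0 : PowerSeries.constantCoeff y = 0)
    (hy : aeval y q = PowerSeries.X) (n : ℕ) :
    (X : ℂ[X])^(n+1) ∣ (PowerSeries.trunc (n+1) y).comp q - X := by
  set P := PowerSeries.trunc (n+1) y with hP
  have h1 : (PowerSeries.X : PowerSeries ℂ)^(n+1) ∣ (P : PowerSeries ℂ) - y := by
    rw [PowerSeries.X_pow_dvd_iff]
    intro m hm
    simp [hP, PowerSeries.coeff_trunc, hm]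
  have h2 : (P : PowerSeries ℂ) - y ∣ aeval (P : PowerSeries ℂ) q - aeval y q := by
    have := Polynomial.sub_dvd_eval_sub (P : PowerSeries ℂ) y (q.map (algebraMap ℂ (PowerSeries ℂ)))
    simpa [Polynomial.aeval_def, Polynomial.eval_map] using this
  have h3 : aeval (P : PowerSeries ℂ) q = ((q.comp P : ℂ[X]) : PowerSeries ℂ) := by
    have := Polynomial.aeval_algHom_apply (Polynomial.coeToPowerSeries.algHom (R := ℂ) ℂ) P q
    simp at this
    rw [this, Polynomial.comp_eq_aeval]
  have h4 : (X : ℂ[X])^(n+1) ∣ q.comp P - X := by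
    rw [Polynomial.X_pow_dvd_iff]
    have h5 := h1.trans h2
    rw [h3, hy, PowerSeries.X_pow_dvd_iff] at h5
    intro m hm
    have := h5 m hm
    rw [← Polynomial.coe_X, ← Polynomial.coe_sub, Polynomial.coeff_coe] at this
    exact this
  have hXq : (X : ℂ[X])^(n+1) ∣ q^(n+1) := pow_dvd_pow_of_dvd ⟨B, hqB⟩ _
  have h5 : (X : ℂ[X])^(n+1) ∣ q.comp (P.comp q) - q := by
    obtain ⟨S, hS⟩ := h4
    refine hXq.trans ⟨S.comp q, ?_⟩
    have := congrArg (fun f => f.comp q) hS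
    simpa [Polynomial.comp_assoc] using this
  set W := P.comp q with hW
  obtain ⟨V, hV⟩ : W - X ∣ B.comp W - B := by
    have := Polynomial.sub_dvd_eval_sub W X (B.map C)
    simpa [Polynomial.comp, Polynomial.eval_map] using this
  have h6 : q.comp W - q = (W - X) * (B.comp W + X * V) := by
    have : B.comp W = B + (W - X) * V := by rw [← hV]; ring
    rw [hqB]
    simp only [Polynomial.mul_comp, Polynomial.X_comp]
    rw [this]; ring
  rw [h6] at h5
  refine Polynomial.prime_X.pow_dvd_of_dvd_mul_right _ ?_ h5
  rw [Polynomial.X_dvd_iff, Polynomial.coeff_zero_eq_eval_zero]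
  have hW0 : W.eval 0 = 0 := by
    rw [hW, Polynomial.eval_comp, hqB]
    simp [← Polynomial.coeff_zero_eq_eval_zero, hP, PowerSeries.coeff_trunc, h0]
  simpa [Polynomial.eval_comp, hW0] using hB0

open Polynomial in
lemma lagrange (q B : ℂ[X]) (hqB : q = X * B) (s : ℝ) (hs : 0 < s)
    (hB : ∀ z : ℂ, ‖z‖ ≤ s → B.eval z ≠ 0)
    (y : PowerSeries ℂ) (h0 : PowerSeries.constantCoeff y = 0)
    (hy : aeval y q = PowerSeries.X) (n : ℕ) :
    (∮ z in C(0, s), ((q.eval z)^n)⁻¹) = 2 * Real.pi * Complex.I * (n * PowerSeries.coeff n y) := by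
  obtain ⟨S, hS⟩ := lagrange_poly q B hqB (hB 0 (by simpa using hs.le)) y h0 hy n
  set P := PowerSeries.trunc (n+1) y with hP
  have hz0 : ∀ z ∈ Metric.sphere (0:ℂ) s, z ≠ 0 := by
    rintro z hz rfl; simp at hz; linarith
  have hBz : ∀ z ∈ Metric.sphere (0:ℂ) s, B.eval z ≠ 0 := fun z hz => hB z (by simp at hz; exact hz.le)
  have hqz : ∀ z ∈ Metric.sphere (0:ℂ) s, q.eval z ≠ 0 := fun z hz => by
    rw [hqB]; simpa using ⟨hz0 z hz, hBz z hz⟩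
  have hder := congrArg derivative hS
  have hanal : ∀ (T : ℂ[X]) (k : ℕ), (∮ z in C(0, s), T.eval z / (B.eval z)^k) = 0 := by
    intro T k
    have hd : ∀ z ∈ Metric.closedBall (0:ℂ) s, DifferentiableAt ℂ (fun z => T.eval z / (B.eval z)^k) z := by
      intro z hz
      exact T.differentiable.differentiableAt.div (B.differentiable.differentiableAt.pow k)
        (pow_ne_zero _ (hB z (by simpa using hz)))
    exact Complex.circleIntegral_eq_zero_of_differentiable_on_off_countable hs.le Set.countable_empty
      (fun z hz => (hd z hz).continuousAt.continuousWithinAt)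
      (fun z hz => hd z (Metric.ball_subset_closedBall hz.1))
  set T : ℂ[X] := C ((n:ℂ)+1) * S + X * derivative S with hT
  have hterm : ∀ i ≤ n, (∮ z in C(0, s), (i : ℂ) * (q.eval z)^(i-1) * (derivative q).eval z / (q.eval z)^n)
      = if i = n then 2 * Real.pi * Complex.I * n else 0 := by
    intro i hi
    by_cases hi0 : i = 0
    · subst hi0
      simp [circleIntegral]
      intro h; exact h.symm
    split_ifs with h
    · subst h
      have e : Set.EqOn (fun z => (i : ℂ) * (q.eval z)^(i-1) * (derivative q).eval z / (q.eval z)^i)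
          (fun z => (i:ℂ) * ((z - 0)⁻¹ + (derivative B).eval z / (B.eval z)^1)) (Metric.sphere 0 s) := by
        intro z hz
        have h1 := hz0 z hz
        have h2 := hBz z hz
        have h3 := hqz z hz
        obtain ⟨j, rfl⟩ : ∃ j, i = j + 1 := ⟨i-1, by omega⟩
        have h4 : (derivative q).eval z = B.eval z + z * (derivative B).eval z := by
          rw [hqB]; simp
        have h5 : q.eval z = z * B.eval z := by rw [hqB]; simp
        simp only [Nat.add_sub_cancel, pow_one, sub_zero]
        rw [h4, pow_succ, h5] 
        field_simp
      rw [circleIntegral.integral_congr hs.le e, circleIntegral.integral_const_mul,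
        circleIntegral.integral_add, hanal, circleIntegral.integral_sub_center_inv _ hs.ne']
      · ring
      · apply ContinuousOn.circleIntegrable hs.le
        intro z hz
        exact ((continuousAt_id.sub continuousAt_const).inv₀ (by simpa using hz0 z hz)).continuousWithinAt
      · apply ContinuousOn.circleIntegrable hs.le
        intro z hz
        exact ((derivative B).continuous.continuousAt.div (B.continuous.continuousAt.pow 1)
          (pow_ne_zero _ (hBz z hz))).continuousWithinAt
    · have hlt : 0 < n - i := by omega
      apply circleIntegral.integral_eq_zero_of_hasDerivWithinAt hs.le
        (f := fun z => (-(i:ℂ)/((n - i : ℕ):ℂ)) * ((q.eval z)^(n-i))⁻¹)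
      intro z hz
      have h3 := hqz z hz
      have hd := ((((q.hasDerivAt z).pow (n-i)).inv (pow_ne_zero _ h3)).const_mul (-(i:ℂ)/((n - i : ℕ):ℂ)))
      refine HasDerivAt.hasDerivWithinAt ?_
      refine hd.congr_deriv ?_
      obtain ⟨j, hj⟩ : ∃ j, n - i = j + 1 := ⟨n-i-1, by omega⟩
      obtain ⟨l, rfl⟩ : ∃ l, i = l + 1 := ⟨i-1, by omega⟩
      have hn : n = j + 1 + (l + 1) := by omega
      have hj' : ((j+1:ℕ):ℂ) ≠ 0 := by exact_mod_cast Nat.succ_ne_zero j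
      rw [hj, hn]
      simp only [Nat.add_sub_cancel, Pi.pow_apply]
      field_simp
      ring
  have key : Set.EqOn (fun z => ((q.eval z)^n)⁻¹)
      (fun z => (∑ i ∈ Finset.range (n+1), PowerSeries.coeff i y *
        ((i : ℂ) * (q.eval z)^(i-1) * (derivative q).eval z / (q.eval z)^n)) - T.eval z / (B.eval z)^n)
      (Metric.sphere 0 s) := by
    intro z hz
    have h1 := hz0 z hz
    have h2 := hBz z hz
    have h3 := hqz z hz
    have hev := congrArg (fun f => Polynomial.eval z f) hder
    have hPd : ∀ x : ℂ, (derivative P).eval x = ∑ i ∈ Finset.range (n+1), PowerSeries.coeff i y * ((i:ℂ) * x^(i-1)) := by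
      intro x
      have hPs : P = ∑ i ∈ Finset.range (n+1), C (PowerSeries.coeff i y) * X^i := by
        ext m
        simp [hP, PowerSeries.coeff_trunc, Polynomial.coeff_X_pow]
      rw [hPs]
      simp [Polynomial.eval_finsetSum, Polynomial.derivative_X_pow]
    simp [Polynomial.derivative_comp] at hev
    rw [hPd] at hev
    have h5 : q.eval z = z * B.eval z := by rw [hqB]; simp
    have hTz : T.eval z / (B.eval z)^n = z^n * T.eval z / (q.eval z)^n := by
      rw [h5, mul_pow]; field_simp
    have hsum : ∑ i ∈ Finset.range (n+1), PowerSeries.coeff i y *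
        ((i : ℂ) * (q.eval z)^(i-1) * (derivative q).eval z / (q.eval z)^n) =
        ((derivative q).eval z * ∑ i ∈ Finset.range (n+1), PowerSeries.coeff i y * ((i:ℂ) * (q.eval z)^(i-1))) / (q.eval z)^n := by
      rw [Finset.mul_sum, Finset.sum_div]
      refine Finset.sum_congr rfl fun i _ => by ring
    simp only []
    rw [hTz, hsum, ← sub_div, inv_eq_one_div]
    congr 1
    have hTe : z^n * T.eval z = (n+1) * z^n * S.eval z + z^(n+1) * (derivative S).eval z := by
      rw [hT]; simp; ring
    rw [hTe]
    linear_combination -hev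
  have hci : ∀ i, CircleIntegrable (fun z => PowerSeries.coeff i y *
        ((i : ℂ) * (q.eval z)^(i-1) * (derivative q).eval z / (q.eval z)^n)) 0 s := by
    intro i
    apply ContinuousOn.circleIntegrable hs.le
    intro z hz
    have h3 := pow_ne_zero n (hqz z hz)
    have : ContinuousAt (fun z => PowerSeries.coeff i y *
        ((i : ℂ) * (q.eval z)^(i-1) * (derivative q).eval z / (q.eval z)^n)) z := by
      have := q.continuous.continuousAt (x := z)
      have := (derivative q).continuous.continuousAt (x := z)
      fun_prop (disch := assumption)
    exact this.continuousWithinAt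
  rw [circleIntegral.integral_congr hs.le key, circleIntegral.integral_sub, hanal, sub_zero,
    circleIntegral.integral_fun_sum (fun i _ => hci i)]
  · simp_rw [circleIntegral.integral_const_mul]
    rw [Finset.sum_congr rfl fun i hi => by rw [hterm i (by simpa [Nat.lt_succ_iff] using hi)]]
    simp; ring
  · exact CircleIntegrable.fun_sum _ fun i _ => hci i
  · apply ContinuousOn.circleIntegrable hs.le
    intro z hz
    exact (T.continuous.continuousAt.div (B.continuous.continuousAt.pow n)
          (pow_ne_zero _ (hBz z hz))).continuousWithinAt

lemma laplace (g h : ℝ → ℂ) (hg : Continuous g) (hh : Continuous h) (ε : ℝ) (hε : 0 < ε)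
    (hb : ∀ θ : ℝ, |θ| ≤ Real.pi → ‖g θ‖ ≤ Real.exp (-ε * θ^2)) (c : ℂ) (hg0 : g 0 = 1)
    (hc : Tendsto (fun θ : ℝ => (g θ - 1) / (θ:ℂ)^2) (nhdsWithin 0 {0}ᶜ) (nhds (-c))) :
    0 < c.re ∧ Tendsto (fun m : ℕ => ((√(m:ℝ) : ℝ) : ℂ) * ∫ θ in (-Real.pi)..Real.pi, h θ * g θ ^ m)
      atTop (nhds (h 0 * (Real.pi / c) ^ (1/2:ℂ))) := by
  have hπ := Real.pi_pos
  have hcre : ε ≤ c.re := by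
    have h1 : Tendsto (fun θ : ℝ => ((g θ - 1) / (θ:ℂ)^2).re) (nhdsWithin 0 {0}ᶜ) (nhds (-c).re) :=
      (Complex.continuous_re.tendsto _).comp hc
    have h2 : Tendsto (fun θ : ℝ => -ε / (1 + ε * θ^2)) (nhdsWithin 0 {0}ᶜ) (nhds (-ε / (1 + ε * 0^2))) := by
      have : ContinuousAt (fun θ : ℝ => -ε / (1 + ε * θ^2)) 0 := by
        apply ContinuousAt.div <;> first | fun_prop | simp
      exact this.tendsto.mono_left nhdsWithin_le_nhds
    have h3 : ∀ᶠ θ : ℝ in nhdsWithin 0 {0}ᶜ, ((g θ - 1) / (θ:ℂ)^2).re ≤ -ε / (1 + ε * θ^2) := by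
      have hm : Metric.ball (0:ℝ) Real.pi ∈ nhdsWithin (0:ℝ) {0}ᶜ :=
        mem_nhdsWithin_of_mem_nhds (Metric.ball_mem_nhds _ hπ)
      filter_upwards [hm, self_mem_nhdsWithin] with θ h1 h2
      rw [mem_ball_zero_iff, Real.norm_eq_abs] at h1
      have h4 := hb θ h1.le
      have h2' : θ ≠ 0 := h2
      have hθ : 0 < θ^2 := by positivity
      have h5 : (g θ - 1).re ≤ Real.exp (-ε * θ^2) - 1 := by
        have := Complex.re_le_norm (g θ)
        rw [Complex.sub_re, Complex.one_re]; linarith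
      have h6 : Real.exp (-ε * θ^2) ≤ (1 + ε * θ^2)⁻¹ := by
        rw [show -ε * θ^2 = -(ε * θ^2) by ring, Real.exp_neg]
        have := Real.add_one_le_exp (ε * θ^2)
        gcongr
        linarith
      have h7 : ((g θ - 1) / (θ:ℂ)^2).re = (g θ - 1).re / θ^2 := by
        rw [← Complex.ofReal_pow, Complex.div_ofReal_re]
      rw [h7, div_le_iff₀ hθ]
      have h8 : (1 + ε * θ^2)⁻¹ - 1 = -ε / (1 + ε * θ^2) * θ^2 := by field_simp; ring
      linarith
    have := le_of_tendsto_of_tendsto h1 h2 h3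
    simp at this; linarith
  have hcpos : 0 < c.re := by linarith
  refine ⟨hcpos, ?_⟩
  rw [← integral_gaussian_complex hcpos, ← MeasureTheory.integral_const_mul]
  let F : ℕ → ℝ → ℂ := fun m => Set.indicator (Set.Ioc (-Real.pi * √(m:ℝ)) (Real.pi * √(m:ℝ)))
    (fun t => h (t / √(m:ℝ)) * g (t / √(m:ℝ)) ^ m)
  have hF : ∀ᶠ m : ℕ in atTop, ∫ t, F m t = ((√(m:ℝ) : ℝ) : ℂ) * ∫ θ in (-Real.pi)..Real.pi, h θ * g θ ^ m := by
    filter_upwards [eventually_gt_atTop 0] with m hm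
    have hsm : 0 < √(m:ℝ) := Real.sqrt_pos.2 (by exact_mod_cast hm)
    simp only [F]
    rw [MeasureTheory.integral_indicator measurableSet_Ioc,
      ← intervalIntegral.integral_of_le (by nlinarith),
      intervalIntegral.integral_comp_div (fun θ => h θ * g θ ^ m) hsm.ne',
      mul_div_cancel_right₀ _ hsm.ne', mul_div_cancel_right₀ _ hsm.ne', Complex.real_smul]
  refine Tendsto.congr' hF ?_
  obtain ⟨M, hM⟩ := (isCompact_Icc (a := -Real.pi) (b := Real.pi)).exists_bound_of_continuousOn hh.continuousOn
  have hM0 : 0 ≤ M := (norm_nonneg _).trans (hM 0 ⟨by linarith, by linarith⟩)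
  refine MeasureTheory.tendsto_integral_filter_of_dominated_convergence (fun t => M * Real.exp (-ε * t^2)) ?_ ?_ ?_ ?_
  · refine Eventually.of_forall fun m => ?_
    refine AEMeasurable.aestronglyMeasurable (Measurable.aemeasurable ?_)
    refine Measurable.indicator (Continuous.measurable ?_) measurableSet_Ioc
    have : Continuous (fun t : ℝ => t / √(m:ℝ)) := by fun_prop
    exact (hh.comp this).mul ((hg.comp this).pow m)
  · filter_upwards [eventually_gt_atTop 0] with m hm
    refine Eventually.of_forall fun t => ?_
    have hsm : 0 < √(m:ℝ) := Real.sqrt_pos.2 (by exact_mod_cast hm)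
    simp only [F]
    by_cases ht : t ∈ Set.Ioc (-Real.pi * √(m:ℝ)) (Real.pi * √(m:ℝ))
    · rw [Set.indicator_of_mem ht]
      have h1 : -Real.pi ≤ t / √(m:ℝ) := by rw [le_div_iff₀ hsm]; exact ht.1.le
      have h2 : t / √(m:ℝ) ≤ Real.pi := by rw [div_le_iff₀ hsm]; exact ht.2
      have h3 := hb _ (abs_le.2 ⟨h1, h2⟩)
      rw [norm_mul, norm_pow]
      have h4 : Real.exp (-ε * t^2) = Real.exp (-ε * (t / √(m:ℝ))^2) ^ m := by
        rw [← Real.exp_nat_mul, div_pow, Real.sq_sqrt (by positivity)]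
        have : (m:ℝ) ≠ 0 := by exact_mod_cast hm.ne'
        congr 1; field_simp
      rw [h4]
      gcongr
      exact hM _ ⟨h1, h2⟩
    · rw [Set.indicator_of_notMem ht]; simp; positivity
  · exact (integrable_exp_neg_mul_sq hε).const_mul M
  · refine Eventually.of_forall fun t => ?_
    have hsq : Tendsto (fun m : ℕ => √(m:ℝ)) atTop atTop := Real.tendsto_sqrt_atTop.comp tendsto_natCast_atTop_atTop
    have hmem : ∀ᶠ m : ℕ in atTop, h (t / √(m:ℝ)) * g (t / √(m:ℝ)) ^ m = F m t := by
      filter_upwards [hsq.eventually_gt_atTop (|t| / Real.pi)] with m hm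
      rw [div_lt_iff₀ hπ] at hm
      simp only [F]
      rw [Set.indicator_of_mem]
      constructor
      · have := neg_abs_le t; linarith
      · have := le_abs_self t; linarith
    refine Tendsto.congr' hmem ?_
    have h0 : Tendsto (fun m : ℕ => t / √(m:ℝ)) atTop (nhds 0) := hsq.const_div_atTop t
    refine Tendsto.mul ((hh.tendsto 0).comp h0) ?_
    by_cases ht : t = 0
    · simp [ht, hg0]
    have h0' : Tendsto (fun m : ℕ => t / √(m:ℝ)) atTop (nhdsWithin 0 {0}ᶜ) := by
      refine tendsto_nhdsWithin_iff.2 ⟨h0, ?_⟩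
      filter_upwards [hsq.eventually_gt_atTop 0] with m hm
      simp [ht, hm.ne']
    have h1 := ((hc.comp h0').mul_const ((t:ℂ)^2))
    have h2 : Tendsto (fun m : ℕ => (m:ℂ) * (g (t / √(m:ℝ)) - 1)) atTop (nhds (-c * (t:ℂ)^2)) := by
      refine Tendsto.congr' ?_ h1
      filter_upwards [eventually_gt_atTop 0] with m hm
      have hsm : (m:ℂ) ≠ 0 := by exact_mod_cast hm.ne'
      have htc : (t:ℂ) ≠ 0 := by exact_mod_cast ht
      have : ((t / √(m:ℝ) : ℝ) : ℂ)^2 = (t:ℂ)^2 / m := by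
        rw [← Complex.ofReal_pow, div_pow, Real.sq_sqrt (by positivity)]; simp
      simp only [Function.comp]
      rw [this]; field_simp
    have := Complex.tendsto_one_add_pow_exp_of_tendsto h2
    simpa using this

lemma taylor2 (G : ℂ → ℂ) (hG : AnalyticAt ℂ G 0) (h0 : G 0 = 1) (h1 : deriv G 0 = 0) :
    ∃ c : ℂ, Tendsto (fun θ : ℝ => (G θ - 1) / (θ:ℂ)^2) (nhdsWithin 0 {0}ᶜ) (nhds (-c)) := by
  obtain ⟨P, hP⟩ := hG
  have e1 := hP.has_fpower_series_dslope_fslope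
  have e2 := e1.has_fpower_series_dslope_fslope
  have hcont := e2.analyticAt.continuousAt
  refine ⟨-(dslope (dslope G 0) 0 0), ?_⟩
  rw [neg_neg]
  have h2 : Tendsto (fun θ : ℝ => (θ:ℂ)) (nhdsWithin 0 {0}ᶜ) (nhds 0) := by
    have := Complex.continuous_ofReal.tendsto (0:ℝ)
    simpa using this.mono_left nhdsWithin_le_nhds
  refine Tendsto.congr' ?_ (hcont.tendsto.comp h2)
  filter_upwards [self_mem_nhdsWithin] with θ hθ
  have hθ' : (θ:ℂ) ≠ 0 := by simpa using hθ
  simp only [Function.comp]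
  rw [dslope_of_ne _ hθ', slope_def_field, dslope_of_ne _ hθ', slope_def_field, dslope_same, h1, h0]
  simp only [sub_zero]
  field_simp

lemma periodic_scale (f : ℝ → ℂ) (hf : Continuous f) (hp : Function.Periodic f (2 * Real.pi)) (N : ℕ)
    (hN : N ≠ 0) : ∫ θ in (0:ℝ)..(2 * Real.pi), f (N * θ) = ∫ θ in (-Real.pi)..Real.pi, f θ := by
  have hN' : (N:ℝ) ≠ 0 := by exact_mod_cast hN
  rw [intervalIntegral.integral_comp_mul_left f hN', mul_zero]
  have h1 := hp.intervalIntegral_add_zsmul_eq (N:ℤ) 0 (fun a b => hf.intervalIntegrable a b)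
  have h2 := hp.intervalIntegral_add_eq 0 (-Real.pi)
  rw [show -Real.pi + 2 * Real.pi = Real.pi by ring, zero_add] at h2
  simp only [zero_add, zsmul_eq_mul, Int.cast_natCast] at h1
  rw [h1, h2, Complex.real_smul]
  push_cast
  rw [← mul_assoc, inv_mul_cancel₀ (by exact_mod_cast hN), one_mul]

/-- The derivative of `QQ`. -/
def dQ {K : Type*} [Field K] (d p : ℕ) (w : K) : K :=
  ∑ k ∈ Finset.range (d+1), (-1:K)^k * (d.choose k) * ((ee p k : ℕ) * w ^ (ee p k - 1))

lemma QQ_hasDeriv {K : Type*} [NontriviallyNormedField K] (d p : ℕ) (w : K) :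
    HasDerivAt (QQ d p) (dQ d p w) w := by
  unfold QQ dQ
  exact HasDerivAt.fun_sum fun k _ => (hasDerivAt_pow _ w).const_mul _

lemma dQ_ofReal (d p : ℕ) (x : ℝ) : ((dQ d p x : ℝ) : ℂ) = dQ d p (x:ℂ) := by
  simp [dQ]

open Polynomial in
/-- The polynomial `q(z)/z`. -/
noncomputable def BP (d p : ℕ) : ℂ[X] := ∑ k ∈ Finset.range (d+1), C ((-1:ℂ)^k * (d.choose k)) * X ^ ((p-1) * ee p k)

lemma BP_eval (d p : ℕ) (z : ℂ) : (BP d p).eval z = QQ d p (z^(p-1)) := by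
  simp [BP, QQ, Polynomial.eval_finsetSum, pow_mul]

lemma BP_aeval (d p : ℕ) (hp : 2 ≤ p) (y : PowerSeries ℚ)
    (heq : ∑ k ∈ Finset.range (d + 1),
        (-1 : PowerSeries ℚ) ^ k * (d.choose k : PowerSeries ℚ) * y ^ p ^ k
        = PowerSeries.X) :
    Polynomial.aeval (PowerSeries.map (algebraMap ℚ ℂ) y) (Polynomial.X * BP d p) = PowerSeries.X := by
  have := congrArg (PowerSeries.map (algebraMap ℚ ℂ)) heq
  rw [PowerSeries.map_X] at this
  rw [← this, BP]
  simp only [map_mul, map_sum, Polynomial.aeval_X, Finset.mul_sum, map_pow, Polynomial.aeval_C, map_neg, map_one, map_natCast]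
  refine Finset.sum_congr rfl fun k _ => ?_
  rw [ee_pow p k hp]
  ring

lemma q_form (d p : ℕ) (hp : 2 ≤ p) (z : ℝ) :
    ∑ k ∈ Finset.range (d + 1), (-1 : ℝ) ^ k * (d.choose k : ℝ) * z ^ p ^ k = z * QQ d p (z^(p-1)) := by
  rw [QQ, Finset.mul_sum]
  refine Finset.sum_congr rfl fun k _ => ?_
  rw [ee_pow p k hp, ← pow_mul]
  ring

lemma q_deriv (d p : ℕ) (z : ℝ) :
    HasDerivAt (fun z : ℝ => z * QQ d p (z^(p-1)))
      (QQ d p (z^(p-1)) + z * (dQ d p (z^(p-1)) * (((p-1:ℕ):ℝ) * z^(p-1-1)))) z := by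
  have hpw : HasDerivAt (fun z : ℝ => z^(p-1)) (((p-1:ℕ):ℝ) * z^(p-1-1)) z := hasDerivAt_pow (p-1) z
  have h1 : HasDerivAt (fun z : ℝ => QQ d p (z^(p-1))) (dQ d p (z^(p-1)) * (((p-1:ℕ):ℝ) * z^(p-1-1))) z :=
    HasDerivAt.comp z (QQ_hasDeriv d p (z^(p-1))) hpw
  have h2 : HasDerivAt (fun z : ℝ => z * QQ d p (z^(p-1)))
      (1 * QQ d p (z^(p-1)) + z * (dQ d p (z^(p-1)) * (((p-1:ℕ):ℝ) * z^(p-1-1)))) z :=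
    (hasDerivAt_id z).mul h1
  refine h2.congr_deriv ?_
  ring

lemma Q_pos (d p : ℕ) (hp : 2 ≤ p) (s : ℝ) (hs : 0 < s)
    (hmin : ∀ t : ℝ, 0 < t → deriv (fun z : ℝ => z * QQ d p (z^(p-1))) t = 0 → s ≤ t) (x : ℝ) (hx0 : 0 ≤ x)
    (hx : x ≤ s^(p-1)) : 0 < QQ d p x := by
  have hp1 : p - 1 ≠ 0 := by omega
  rcases hx0.eq_or_lt with rfl | hx0
  · rw [QQ_zero d p hp]; norm_num
  set q := fun z : ℝ => z * QQ d p (z^(p-1)) with hq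
  have hcd : Continuous (deriv q) := by
    have : deriv q = fun z => (QQ d p (z^(p-1)) + z * (dQ d p (z^(p-1)) * (((p-1:ℕ):ℝ) * z^(p-1-1)))) :=
      funext fun z => (q_deriv d p z).deriv
    rw [this]; unfold QQ dQ; fun_prop
  have hd0 : deriv q 0 = 1 := by
    rw [(q_deriv d p 0).deriv, zero_pow hp1, QQ_zero d p hp]; simp
  have hpos : ∀ t ∈ Set.Ioo 0 s, 0 < deriv q t := by
    intro t ht
    by_contra hneg
    push Not at hneg
    obtain ⟨c, hc, hc0⟩ := intermediate_value_Icc' ht.1.le hcd.continuousOn ⟨hneg, by rw [hd0]; norm_num⟩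
    have hcne : c ≠ 0 := by rintro rfl; rw [hd0] at hc0; norm_num at hc0
    have := hmin c (lt_of_le_of_ne hc.1 hcne.symm) hc0
    linarith [hc.2, ht.2]
  have hmono : StrictMonoOn q (Set.Icc 0 s) := by
    refine strictMonoOn_of_deriv_pos (convex_Icc 0 s) ?_ ?_
    · exact fun z _ => (q_deriv d p z).continuousAt.continuousWithinAt
    · rw [interior_Icc]; exact hpos
  obtain ⟨t, ht0, ht⟩ : ∃ t : ℝ, 0 < t ∧ t^(p-1) = x :=
    ⟨x ^ ((p-1:ℕ):ℝ)⁻¹, by positivity, Real.rpow_inv_natCast_pow hx0.le hp1⟩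
  have hts : t ≤ s := by
    rw [← ht] at hx
    exact le_of_pow_le_pow_left₀ hp1 hs.le hx
  have := hmono ⟨le_rfl, hs.le⟩ ⟨ht0.le, hts⟩ ht0
  simp only [hq, zero_mul, ht] at this
  exact pos_of_mul_pos_right this ht0.le

lemma main_formula (d p : ℕ) (hd : 1 ≤ d) (hp : 2 ≤ p) (y : PowerSeries ℚ)
    (h0 : PowerSeries.constantCoeff y = 0)
    (heq : ∑ k ∈ Finset.range (d + 1),
        (-1 : PowerSeries ℚ) ^ k * (d.choose k : PowerSeries ℚ) * y ^ p ^ k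
        = PowerSeries.X) (s : ℝ) (hs : 0 < s)
    (hQ : ∀ x : ℝ, 0 ≤ x → x ≤ s^(p-1) → 0 < QQ d p x)
    (g h : ℝ → ℂ) (hgc : Continuous g) (hhc : Continuous h)
    (hg : ∀ θ : ℝ, g θ = (QQ d p (s^(p-1)) * (QQ d p (((s^(p-1) : ℝ):ℂ) * Complex.exp (θ * Complex.I)))⁻¹)^(p-1)
      * Complex.exp (-(θ * Complex.I)))
    (hh : ∀ θ : ℝ, h θ = (QQ d p (((s^(p-1) : ℝ):ℂ) * Complex.exp (θ * Complex.I)))⁻¹) (m : ℕ) :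
    (((PowerSeries.coeff (m * (p - 1) + 1) y : ℚ) : ℝ) : ℂ) =
      (((s * QQ d p (s^(p-1)))^(p-1) : ℝ) : ℂ)⁻¹ ^ m * (2 * Real.pi * ((m * (p-1) + 1 : ℕ) : ℂ))⁻¹ *
        ∫ θ in (-Real.pi)..Real.pi, h θ * g θ ^ m := by
  have hπ := Real.pi_pos
  have hp1 : p - 1 ≠ 0 := by omega
  set n := m * (p-1) + 1 with hn
  set r := s^(p-1) with hr
  have hL := lagrange (Polynomial.X * BP d p) (BP d p) rfl s hs (fun z hz => by
    rw [BP_eval]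
    refine no_roots d p hd hp r hQ _ ?_
    rw [norm_pow]; exact pow_le_pow_left₀ (norm_nonneg z) hz (p-1)) (PowerSeries.map (algebraMap ℚ ℂ) y) (by
      rw [← PowerSeries.coeff_zero_eq_constantCoeff_apply, PowerSeries.coeff_map, PowerSeries.coeff_zero_eq_constantCoeff_apply, h0, map_zero]) (BP_aeval d p hp y heq) n
  have hper : Function.Periodic (fun θ => h θ * g θ ^ m) (2 * Real.pi) := by
    intro θ
    have e1 : Complex.exp (((θ + 2 * Real.pi : ℝ):ℂ) * Complex.I) = Complex.exp (θ * Complex.I) := by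
      push_cast; rw [add_mul, Complex.exp_add, Complex.exp_two_pi_mul_I, mul_one]
    simp only []
    rw [hh, hg, hh, hg, Complex.exp_neg, Complex.exp_neg, e1]
  have hint : ∫ θ in (0:ℝ)..(2*Real.pi), h (((p-1:ℕ):ℝ)*θ) * g (((p-1:ℕ):ℝ)*θ)^m =
      ∫ θ in (-Real.pi)..Real.pi, h θ * g θ ^ m := periodic_scale (fun θ => h θ * g θ ^ m) (hhc.mul (hgc.pow m)) hper (p-1) hp1
  have hQr : 0 < QQ d p r := hQ r (by positivity) le_rfl
  have hcirc : (∮ z in C(0, s), (((Polynomial.X * BP d p).eval z)^n)⁻¹) =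
      Complex.I * ((((s * QQ d p r)^(p-1) : ℝ) : ℂ)⁻¹ ^ m * ∫ θ in (-Real.pi)..Real.pi, h θ * g θ ^ m) := by
    rw [← hint, circleIntegral, ← intervalIntegral.integral_const_mul, ← intervalIntegral.integral_const_mul]
    refine intervalIntegral.integral_congr fun θ _ => ?_
    simp only [deriv_circleMap, smul_eq_mul, Polynomial.eval_mul, Polynomial.eval_X, BP_eval, circleMap_zero]
    have e1 : ((s:ℂ) * Complex.exp (θ * Complex.I))^(p-1) =
        ((r:ℝ):ℂ) * Complex.exp (((((p-1:ℕ):ℝ) * θ : ℝ) : ℂ) * Complex.I) := by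
      rw [mul_pow, ← Complex.exp_nat_mul, hr]; push_cast; ring_nf
    rw [hh, hg, Complex.exp_neg, e1]
    set E := Complex.exp (((((p-1:ℕ):ℝ) * θ : ℝ) : ℂ) * Complex.I) with hE
    have hQne : QQ d p ((r:ℂ) * E) ≠ 0 := by
      refine no_roots d p hd hp r hQ _ ?_
      rw [hE, norm_mul, Complex.norm_exp_ofReal_mul_I, Complex.norm_real, mul_one, Real.norm_of_nonneg (by positivity)]
    have hZ : (s:ℂ) * Complex.exp (θ * Complex.I) ≠ 0 :=
      mul_ne_zero (by exact_mod_cast hs.ne') (Complex.exp_ne_zero _)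
    set Z := (s:ℂ) * Complex.exp (θ * Complex.I) with hZd
    set A := QQ d p ((r:ℂ) * E) with hA
    have hEne : E ≠ 0 := Complex.exp_ne_zero _
    have hrne : (r:ℂ) ≠ 0 := by
      have : r ≠ 0 := by positivity
      exact_mod_cast this
    have hQrne : QQ d p (r:ℂ) ≠ 0 := by rw [← QQ_ofReal]; exact_mod_cast hQr.ne'
    have e2 : ((((s * QQ d p r)^(p-1) : ℝ)) : ℂ) = (r:ℂ) * (QQ d p (r:ℂ))^(p-1) := by
      rw [mul_pow, ← hr]; push_cast; rw [QQ_ofReal]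
    have e3 : (Z * A)^n = Z * A * ((r:ℂ) * E * A^(p-1))^m := by
      rw [hn, pow_succ, mul_comm m, pow_mul, mul_pow, e1]; ring
    rw [e2, e3]
    try rw [QQ_ofReal]
    simp only [mul_pow, inv_pow]
    try rw [← hr]
    field_simp
  rw [hcirc] at hL
  have hcoef : PowerSeries.coeff n (PowerSeries.map (algebraMap ℚ ℂ) y) = (((PowerSeries.coeff n y : ℚ) : ℝ) : ℂ) := by
    rw [PowerSeries.coeff_map]; simp
  rw [hcoef] at hL
  have hnne : ((n:ℕ):ℂ) ≠ 0 := by rw [hn]; exact Nat.cast_ne_zero.2 (Nat.succ_ne_zero _)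
  have hπc : (Real.pi : ℂ) ≠ 0 := by exact_mod_cast hπ.ne'
  have hL2 := mul_left_cancel₀ Complex.I_ne_zero (hL.trans (show _ = Complex.I * (2 * Real.pi * (n * (((PowerSeries.coeff n y : ℚ) : ℝ) : ℂ))) by ring))
  rw [mul_right_comm, hL2]
  field_simp

theorem statement_10' (d p : ℕ) (hd : 1 ≤ d) (hp : 2 ≤ p)
    (y : PowerSeries ℚ)
    (h0 : PowerSeries.constantCoeff y = 0)
    (heq : ∑ k ∈ Finset.range (d + 1),
        (-1 : PowerSeries ℚ) ^ k * (d.choose k : PowerSeries ℚ) * y ^ p ^ k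
        = PowerSeries.X)
    (s : ℝ) (hs : 0 < s) (hcrit : deriv (fun z : ℝ => z * QQ d p (z^(p-1))) s = 0)
    (hmin : ∀ t : ℝ, 0 < t → deriv (fun z : ℝ => z * QQ d p (z^(p-1))) t = 0 → s ≤ t) :
    Tendsto
      (fun m : ℕ =>
        ((PowerSeries.coeff ((m + 1) * (p - 1) + 1) y : ℚ) : ℝ) /
          ((PowerSeries.coeff (m * (p - 1) + 1) y : ℚ) : ℝ))
      atTop (nhds (1 / (s * QQ d p (s^(p-1))) ^ (p - 1))) := by
  have hπ := Real.pi_pos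
  have hp1 : p - 1 ≠ 0 := by omega
  have hQ := Q_pos d p hp s hs hmin
  set r := s^(p-1) with hr
  have hr0 : 0 < r := by positivity
  have hQr : 0 < QQ d p r := hQ r hr0.le le_rfl
  have hQrc : (QQ d p (r:ℂ)) ≠ 0 := by rw [← QQ_ofReal]; exact_mod_cast hQr.ne'
  obtain ⟨ε, hε, hbound⟩ := norm_bound d p hd hp r hr0 hQ
  let H : ℂ → ℂ := fun ζ => (QQ d p ((r:ℂ) * Complex.exp (ζ * Complex.I)))⁻¹
  let G : ℂ → ℂ := fun ζ => (QQ d p (r:ℂ) * H ζ)^(p-1) * Complex.exp (-(ζ * Complex.I))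
  have hne : ∀ θ : ℝ, QQ d p ((r:ℂ) * Complex.exp (θ * Complex.I)) ≠ 0 := fun θ =>
    no_roots d p hd hp r hQ _ (by
      rw [norm_mul, Complex.norm_exp_ofReal_mul_I, Complex.norm_real, mul_one, Real.norm_of_nonneg hr0.le])
  have hinner : Differentiable ℂ (fun ζ : ℂ => QQ d p ((r:ℂ) * Complex.exp (ζ * Complex.I))) :=
    (QQ_diff d p).comp (by fun_prop)
  have hhc : Continuous (fun θ : ℝ => H θ) := by
    refine Continuous.inv₀ (hinner.continuous.comp Complex.continuous_ofReal) hne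
  have hgc : Continuous (fun θ : ℝ => G θ) := by
    refine ((continuous_const.mul hhc).pow _).mul ?_
    fun_prop
  have hG0 : G 0 = 1 := by simp [G, H, hQrc]
  have hHd : HasDerivAt H (-(dQ d p (r:ℂ) * ((r:ℂ) * Complex.I)) / (QQ d p (r:ℂ))^2) 0 := by
    have h1 : HasDerivAt (fun ζ : ℂ => (r:ℂ) * Complex.exp (ζ * Complex.I)) ((r:ℂ) * Complex.I) 0 := by
      have := (((hasDerivAt_id (0:ℂ)).mul_const Complex.I).cexp).const_mul (r:ℂ)
      refine this.congr_deriv ?_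
      simp
    have h2 : HasDerivAt (QQ d p) (dQ d p (r:ℂ)) ((r:ℂ) * Complex.exp ((0:ℂ) * Complex.I)) := by
      simpa using QQ_hasDeriv d p (r:ℂ)
    have h3 := (h2.comp (0:ℂ) h1).inv (by simpa using hQrc)
    refine h3.congr_deriv ?_
    simp
  have hcrit' : QQ d p (r:ℂ) + ((p-1:ℕ):ℂ) * r * dQ d p (r:ℂ) = 0 := by
    rw [(q_deriv d p s).deriv, ← hr] at hcrit
    have : s * s^(p-1-1) = r := by
      rw [hr, ← pow_succ', Nat.sub_add_cancel (by omega)]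
    rw [← QQ_ofReal, ← dQ_ofReal]
    have h2 : QQ d p r + ((p-1:ℕ):ℝ) * r * dQ d p r = 0 := by
      rw [← hcrit, ← this]; ring
    exact_mod_cast h2
  have hGd : deriv G 0 = 0 := by
    have h1 := ((hHd.const_mul (QQ d p (r:ℂ))).pow (p-1))
    have h2 := ((hasDerivAt_id (0:ℂ)).mul_const Complex.I).neg.cexp
    have h3 := h1.mul h2
    have h4 : G = _ := rfl
    have h5 := h3.deriv
    have hH0 : QQ d p (r:ℂ) * H 0 = 1 := by simp [H, hQrc]
    refine Eq.trans ?_ (h5.trans ?_)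
    · rfl
    · simp [hH0]
      field_simp
      linear_combination (-Complex.I) * hcrit'
  have hGa : AnalyticAt ℂ G 0 := by
    have h1 : AnalyticAt ℂ (fun ζ : ℂ => QQ d p ((r:ℂ) * Complex.exp (ζ * Complex.I))) 0 := hinner.analyticAt 0
    have h2 : AnalyticAt ℂ H 0 := h1.inv (by simpa using hQrc)
    have h3 : AnalyticAt ℂ (fun ζ : ℂ => Complex.exp (-(ζ * Complex.I))) 0 := by fun_prop
    exact ((analyticAt_const.mul h2).pow _).mul h3
  obtain ⟨c, hc⟩ := taylor2 G hGa hG0 hGd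
  have hgb : ∀ θ : ℝ, |θ| ≤ Real.pi → ‖G θ‖ ≤ Real.exp (-ε * θ^2) := by
    intro θ hθ
    have h1 := hbound θ hθ
    have h2 : ‖G θ‖ = (QQ d p r * ‖H θ‖)^(p-1) := by
      simp only [G]
      rw [norm_mul, norm_pow, norm_mul, ← QQ_ofReal, Complex.norm_real, Real.norm_of_nonneg hQr.le,
        ← neg_mul, ← Complex.ofReal_neg, Complex.norm_exp_ofReal_mul_I, mul_one]
    have h3 : QQ d p r * ‖H θ‖ ≤ Real.exp (-ε * θ^2) := by
      calc _ ≤ QQ d p r * ((QQ d p r)⁻¹ * Real.exp (-ε * θ^2)) := by gcongr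
        _ = _ := by field_simp
    have h4 : Real.exp (-ε * θ^2) ≤ 1 := by
      rw [Real.exp_le_one_iff]; nlinarith [sq_nonneg θ]
    rw [h2]
    calc _ ≤ Real.exp (-ε * θ^2) ^ (p-1) := by gcongr
      _ ≤ _ := pow_le_of_le_one (Real.exp_pos _).le h4 hp1
  obtain ⟨hcre, hlim⟩ := laplace (fun θ : ℝ => G θ) (fun θ : ℝ => H θ) hgc hhc ε hε hgb c (by simpa using hG0) hc
  set L : ℂ := H ((0:ℝ):ℂ) * (Real.pi / c) ^ (1/2:ℂ) with hLdef
  have hL : L ≠ 0 := by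
    have hcne : c ≠ 0 := by rintro rfl; simp at hcre
    refine mul_ne_zero (inv_ne_zero (hne 0)) ?_
    rw [Complex.cpow_ne_zero_iff]
    left
    exact div_ne_zero (by exact_mod_cast hπ.ne') hcne
  have hform := main_formula d p hd hp y h0 heq s hs hQ (fun θ : ℝ => G θ) (fun θ : ℝ => H θ) hgc hhc
    (fun θ => by simp only [G, H]; rw [QQ_ofReal]) (fun θ => rfl)
  set J : ℕ → ℂ := fun m => ∫ θ in (-Real.pi)..Real.pi, H θ * G θ ^ m with hJ
  set K : ℕ → ℂ := fun m => ((√(m:ℝ) : ℝ) : ℂ) * J m with hK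
  set ρ : ℝ := (s * QQ d p r)^(p-1) with hρ
  have hρ0 : 0 < ρ := by positivity
  have hratio : Tendsto (fun m => K (m+1) / K m) atTop (nhds 1) := by
    have := ((tendsto_add_atTop_iff_nat 1).2 hlim).div hlim hL
    rwa [div_self hL] at this
  have hfac : Tendsto (fun m : ℕ => √((m:ℝ)/(m+1)) * (((m * (p-1) + 1 : ℕ):ℝ) / (((m+1) * (p-1) + 1 : ℕ):ℝ)))
      atTop (nhds (√1 * 1)) := by
    have ha : Tendsto (fun m : ℕ => (m:ℝ)/(m+1)) atTop (nhds 1) := tendsto_natCast_div_add_atTop (1:ℝ)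
    refine Tendsto.mul ((Real.continuous_sqrt.tendsto 1).comp ha) ?_
    set a : ℝ := ((p-1:ℕ):ℝ) with ha'
    have hapos : 0 < a := by rw [ha']; exact_mod_cast Nat.pos_of_ne_zero hp1
    have h1 : Tendsto (fun m : ℕ => 1 - a * (1 / (((m+1) * (p-1) + 1 : ℕ):ℝ))) atTop (nhds (1 - a * 0)) := by
      refine tendsto_const_nhds.sub (tendsto_const_nhds.mul ?_)
      have : Tendsto (fun m : ℕ => (m+1) * (p-1) + 1) atTop atTop := by
        refine tendsto_atTop_mono (fun m => ?_) tendsto_id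
        have : m + 1 ≤ (m+1) * (p-1) := Nat.le_mul_of_pos_right _ (by omega)
        simp only [id]; omega
      exact tendsto_one_div_atTop_nhds_zero_nat.comp this
    rw [mul_zero, sub_zero] at h1
    refine h1.congr fun m => ?_
    push_cast
    rw [← ha']
    have : (m+1:ℝ) * a + 1 ≠ 0 := by positivity
    field_simp
    ring
  rw [Real.sqrt_one, mul_one] at hfac
  have hfacc := (Complex.continuous_ofReal.tendsto _).comp hfac
  have hall := (hratio.mul hfacc).const_mul ((ρ:ℂ)⁻¹)
  have hform2 : ∀ m : ℕ, (((PowerSeries.coeff (m * (p - 1) + 1) y : ℚ) : ℝ) : ℂ) =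
      (ρ:ℂ)⁻¹ ^ m * (2 * Real.pi * ((m * (p-1) + 1 : ℕ) : ℂ))⁻¹ * J m := hform
  have hgoalC : Tendsto (fun m : ℕ => ((((PowerSeries.coeff ((m + 1) * (p - 1) + 1) y : ℚ) : ℝ) /
          ((PowerSeries.coeff (m * (p - 1) + 1) y : ℚ) : ℝ) : ℝ) : ℂ)) atTop (nhds (((1/ρ : ℝ)) : ℂ)) := by
    have e : (ρ:ℂ)⁻¹ * (1 * ((1:ℝ):ℂ)) = ((1/ρ : ℝ) : ℂ) := by push_cast; ring
    rw [e] at hall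
    refine hall.congr' ?_
    filter_upwards [eventually_gt_atTop 0] with m hm
    have hm' : (0:ℝ) < m := by exact_mod_cast hm
    simp only [Function.comp]
    rw [Complex.ofReal_div, hform2 m, hform2 (m+1), Real.sqrt_div hm'.le]
    simp only [hK]
    push_cast
    have h1 : ((√(m:ℝ) : ℝ):ℂ) ≠ 0 := by exact_mod_cast (Real.sqrt_pos.2 hm').ne'
    have h2 : ((√((m:ℝ)+1) : ℝ):ℂ) ≠ 0 := by exact_mod_cast (Real.sqrt_pos.2 (by positivity)).ne'
    have h3 : (ρ:ℂ) ≠ 0 := by exact_mod_cast hρ0.ne'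
    have h4 : (m:ℂ) * ((p-1:ℕ):ℂ) + 1 ≠ 0 := by exact_mod_cast Nat.succ_ne_zero (m * (p-1))
    have h5 : ((m:ℂ)+1) * ((p-1:ℕ):ℂ) + 1 ≠ 0 := by exact_mod_cast Nat.succ_ne_zero ((m+1) * (p-1))
    have h6 : (Real.pi:ℂ) ≠ 0 := by exact_mod_cast hπ.ne'
    rw [pow_succ]
    by_cases hJm : J m = 0
    · simp [hJm]
    field_simp
  have := (Complex.continuous_re.tendsto _).comp hgoalC
  simpa only [Function.comp_def, Complex.ofReal_re] using this



/-- Fix `d ≥ 1` and `p ≥ 2`, let `q(z) = ∑_{k=0}^{d} (-1)^k C(d,k) z^{p^k}`,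
and let `s > 0` be the smallest positive real with `q'(s) = 0`.  Then the growth-rate limit
`G_{d,p} = lim_{m→∞} C_{d,p}((m+1)(p-1)+1) / C_{d,p}(m(p-1)+1)` exists and equals
`1 / q(s)^{p-1}`, where `C_{d,p}(n)` is the coefficient of `x^n` in the unique power series
`y ∈ ℚ⟦x⟧` with zero constant term satisfying `∑_{k=0}^{d} (-1)^k C(d,k) y^{p^k} = x`. -/
theorem statement_10 (d p : ℕ) (hd : 1 ≤ d) (hp : 2 ≤ p)
    (y : PowerSeries ℚ)
    (h0 : PowerSeries.constantCoeff y = 0)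
    (heq : ∑ k ∈ Finset.range (d + 1),
        (-1 : PowerSeries ℚ) ^ k * (d.choose k : PowerSeries ℚ) * y ^ p ^ k
        = PowerSeries.X)
    (q : ℝ → ℝ)
    (hq : ∀ z : ℝ, q z =
        ∑ k ∈ Finset.range (d + 1), (-1 : ℝ) ^ k * (d.choose k : ℝ) * z ^ p ^ k)
    (s : ℝ) (hs : 0 < s) (hcrit : deriv q s = 0)
    (hmin : ∀ t : ℝ, 0 < t → deriv q t = 0 → s ≤ t) :
    Tendsto
      (fun m : ℕ =>
        ((PowerSeries.coeff ((m + 1) * (p - 1) + 1) y : ℚ) : ℝ) /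
          ((PowerSeries.coeff (m * (p - 1) + 1) y : ℚ) : ℝ))
      atTop (nhds (1 / q s ^ (p - 1))) := by
  have hqe : q = fun z : ℝ => z * QQ d p (z^(p-1)) := funext fun z => by rw [hq, q_form d p hp]
  subst hqe
  exact statement_10' d p hd hp y h0 heq s hs hcrit hmin
end

section
/- For all integers d ≥ 1 and p ≥ 2, the coefficients a_n of φ_{d,p} satisfy: (i) a_n = 0 whenever (p−1) does not divide n (so φ_{d,p} is (p−1)-periodic), and (ii) a_n = d^{n/(p−1)} for every n with 0 ≤ n < p^2 − 1 and (p−1) | n. -/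
/-- For `d ≥ 1`, `p ≥ 2`, let `P(z) = ∑_{k=0}^{d} (-1)^k C(d,k) z^{p^k - 1}`
in `ℚ⟦z⟧`, let `φ_{d,p}` be its multiplicative inverse, and let `a_n` be the coefficient of
`z^n` in `φ_{d,p}`.  Then (i) `a_n = 0` whenever `(p-1) ∤ n` (so `φ_{d,p}` is
`(p-1)`-periodic), and (ii) `a_n = d^{n/(p-1)}` for every `n` with `0 ≤ n < p^2 - 1` and
`(p-1) ∣ n`. -/
theorem statement_12 (d p : ℕ) (hd : 1 ≤ d) (hp : 2 ≤ p)
    (P φ : PowerSeries ℚ)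
    (hP : P = ∑ k ∈ Finset.range (d + 1),
        (-1 : PowerSeries ℚ) ^ k * (d.choose k : PowerSeries ℚ) * PowerSeries.X ^ (p ^ k - 1))
    (hφ : P * φ = 1) :
    (∀ n : ℕ, ¬ (p - 1) ∣ n → PowerSeries.coeff n φ = 0) ∧
    (∀ n : ℕ, n < p ^ 2 - 1 → (p - 1) ∣ n →
      PowerSeries.coeff n φ = (d : ℚ) ^ (n / (p - 1))) := by
  have hrec : ∀ n : ℕ, (∑ k ∈ Finset.range d, (-1 : ℚ) ^ (k + 1) * (d.choose (k + 1) : ℚ) *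
      (if p ^ (k + 1) - 1 ≤ n then PowerSeries.coeff (n - (p ^ (k + 1) - 1)) φ else 0))
      + PowerSeries.coeff n φ = if n = 0 then 1 else 0 := by
    intro n
    have h := congrArg (PowerSeries.coeff n) hφ
    rw [PowerSeries.coeff_one] at h
    rw [← h, hP, Finset.sum_range_succ', add_mul, map_add, Finset.sum_mul, map_sum]
    congr 1
    · apply Finset.sum_congr rfl
      intro k _
      have e : (-1 : PowerSeries ℚ) ^ (k + 1) * (d.choose (k + 1) : PowerSeries ℚ)
          * PowerSeries.X ^ (p ^ (k + 1) - 1) * φ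
          = PowerSeries.C ((-1 : ℚ) ^ (k + 1) * (d.choose (k + 1) : ℚ))
            * (PowerSeries.X ^ (p ^ (k + 1) - 1) * φ) := by
        simp only [map_mul, map_pow, map_neg, map_one, map_natCast]
        ring
      rw [e, PowerSeries.coeff_C_mul, PowerSeries.coeff_X_pow_mul']
    · simp
  have hpos : ∀ k : ℕ, 1 ≤ p ^ (k + 1) - 1 := by
    intro k
    have : p ^ 1 ≤ p ^ (k + 1) := Nat.pow_le_pow_right (by omega) (by omega)
    rw [pow_one] at this
    omega
  constructor
  · intro n
    induction n using Nat.strong_induction_on with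
    | _ n ih =>
      intro hn
      have h := hrec n
      have hn0 : n ≠ 0 := by rintro rfl; simp at hn
      rw [if_neg hn0, Finset.sum_eq_zero, zero_add] at h
      · exact h
      · intro k _
        split_ifs with hk
        · rw [ih _ (by have := hpos k; omega), mul_zero]
          intro hdvd
          apply hn
          have h2 : p - 1 ∣ p ^ (k + 1) - 1 := by
            simpa using Nat.sub_dvd_pow_sub_pow p 1 (k + 1)
          have := Nat.dvd_add hdvd h2
          rwa [Nat.sub_add_cancel hk] at this
        · simp
  · intro n hn hdvd
    obtain ⟨m, rfl⟩ := hdvd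
    rw [Nat.mul_div_cancel_left _ (by omega)]
    induction m with
    | zero =>
      have h := hrec 0
      rw [if_pos (by rfl), Finset.sum_eq_zero, zero_add] at h
      · simpa using h
      · intro k _
        rw [if_neg (by have := hpos k; omega), mul_zero]
    | succ m ih =>
      have h := hrec ((p - 1) * (m + 1))
      have e1 : (p - 1) * (m + 1) = (p - 1) * m + (p - 1) := by ring
      obtain ⟨e, rfl⟩ : ∃ e, d = e + 1 := ⟨d - 1, by omega⟩
      rw [Finset.sum_range_succ', Finset.sum_eq_zero,
        if_neg (show ¬ (p - 1) * (m + 1) = 0 by rw [e1]; omega)] at h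
      · have e2 : (p - 1) * (m + 1) - (p ^ (0 + 1) - 1) = (p - 1) * m := by
          rw [e1]; simp
        rw [e2, if_pos (by rw [e1]; simp), ih (by omega)] at h
        rw [pow_succ]
        simp at h
        push_cast
        linarith
      · intro k _
        have : p ^ 2 ≤ p ^ (k + 1 + 1) := Nat.pow_le_pow_right (by omega) (by omega)
        rw [if_neg (by omega), mul_zero]
end

section
/- For all integers d ≥ 1 and p ≥ 2: q_{d,p}(1) = 0, so the set of positive real roots of q_{d,p} is nonempty and has a least element r ∈ (0,1]; and there exists a unique s ∈ (0, r) with q_{d,p}'(s) = 0. -/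
open Filter Topology in
/-- one step of discrete Rolle -/
theorem aux_step (a : ℤ → ℝ) (x : ℤ) (n : ℕ) (h : a x < a (x + n)) :
    ∃ j, x < j ∧ j ≤ x + n ∧ a (j - 1) < a j := by
  induction n with
  | zero => simp at h
  | succ n ih =>
    by_cases h2 : a x < a (x + n)
    · obtain ⟨j, h1, h3, h4⟩ := ih h2
      exact ⟨j, h1, by push_cast; omega, h4⟩
    · refine ⟨x + (n + 1 : ℕ), by push_cast; omega, le_rfl, ?_⟩
      have : x + ((n + 1 : ℕ) : ℤ) - 1 = x + n := by push_cast; ring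
      rw [this]
      linarith

theorem aux_step2 (a : ℤ → ℝ) (x y : ℤ) (hxy : x < y) (h : a x < a y) :
    ∃ j, x < j ∧ j ≤ y ∧ 0 < a j - a (j - 1) := by
  have hy : x + ((y - x).toNat : ℤ) = y := by omega
  obtain ⟨j, h1, h2, h3⟩ := aux_step a x (y - x).toNat (by rw [hy]; exact h)
  exact ⟨j, h1, by omega, by linarith⟩

def AltN (a : ℤ → ℝ) (n : ℕ) : Prop :=
  ∃ m : ℕ → ℤ, (∀ i < n, m i < m (i + 1)) ∧ ∀ i ≤ n, 0 < (-1 : ℝ) ^ i * a (m i)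

open Filter Topology in
theorem aux_alt (a : ℤ → ℝ) (n : ℕ) (h1 : Tendsto a atTop (𝓝 0)) (h2 : Tendsto a atBot (𝓝 0))
    (h : AltN a n) : AltN (fun j => a j - a (j - 1)) (n + 1) := by
  obtain ⟨m, hm, hs⟩ := h
  have hN : ∃ N, N < m 0 ∧ a N < a (m 0) := by
    have h0 := hs 0 (by omega)
    simp at h0
    exact ((eventually_lt_atBot (m 0)).and (h2.eventually (gt_mem_nhds h0))).exists
  obtain ⟨N, hN1, hN2⟩ := hN
  have hN' : ∃ N, m n < N ∧ (-1 : ℝ) ^ n * a N < (-1 : ℝ) ^ n * a (m n) := by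
    have h0 := hs n le_rfl
    have h3 : Tendsto (fun j => (-1 : ℝ) ^ n * a j) atTop (𝓝 0) := by
      simpa using h1.const_mul ((-1 : ℝ) ^ n)
    exact ((eventually_gt_atTop (m n)).and (h3.eventually (gt_mem_nhds h0))).exists
  obtain ⟨N', hN1', hN2'⟩ := hN'
  let t : ℕ → ℤ := fun i => if i = 0 then N else if i ≤ n + 1 then m (i - 1) else N'
  have ht : ∀ i ≤ n + 1, t i < t (i + 1) ∧
      (-1 : ℝ) ^ i * a (t i) < (-1 : ℝ) ^ i * a (t (i + 1)) := by
    intro i hi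
    rcases i with _ | i
    · simp [t, hN1, hN2]
    · rcases Nat.lt_or_ge i n with hin | hin
      · have e1 : t (i + 1) = m i := by simp [t]; omega
        have e2 : t (i + 1 + 1) = m (i + 1) := by simp [t]; omega
        rw [e1, e2]
        refine ⟨hm i hin, ?_⟩
        have k1 := hs i (by omega)
        have k2 := hs (i + 1) (by omega)
        have : (-1 : ℝ) ^ (i + 1) * a (m i) = -((-1 : ℝ) ^ i * a (m i)) := by ring
        linarith
      · have : i = n := by omega
        subst this
        have e1 : t (i + 1) = m i := by simp [t]
        have e2 : t (i + 1 + 1) = N' := by simp [t]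
        rw [e1, e2]
        refine ⟨hN1', ?_⟩
        rw [pow_succ]
        linarith
  have hM : ∀ i, ∃ M, i ≤ n + 1 → t i < M ∧ M ≤ t (i + 1) ∧
      0 < (-1 : ℝ) ^ i * (a M - a (M - 1)) := by
    intro i
    by_cases hi : i ≤ n + 1
    · obtain ⟨k1, k2⟩ := ht i hi
      obtain ⟨j, j1, j2, j3⟩ := aux_step2 (fun j => (-1 : ℝ) ^ i * a j) _ _ k1 k2
      exact ⟨j, fun _ => ⟨j1, j2, by rw [mul_sub]; exact j3⟩⟩
    · exact ⟨0, fun h => absurd h hi⟩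
  choose M hM using hM
  refine ⟨M, fun i hi => ?_, fun i hi => (hM i hi).2.2⟩
  exact lt_of_le_of_lt (hM i (by omega)).2.1 (hM (i + 1) (by omega)).1

theorem aux_rolle (f f' : ℝ → ℝ) (hf : ∀ x, HasDerivAt f (f' x) x) (n : ℕ) (x : ℕ → ℝ)
    (hx : ∀ i < n, x i < x (i + 1)) (h0 : ∀ i ≤ n, f (x i) = 0) :
    ∃ y : ℕ → ℝ, ∀ i < n, x i < y i ∧ y i < x (i + 1) ∧ f' (y i) = 0 := by
  have : ∀ i, ∃ y, i < n → x i < y ∧ y < x (i + 1) ∧ f' y = 0 := by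
    intro i
    by_cases hi : i < n
    · obtain ⟨c, hc, hc'⟩ := exists_hasDerivAt_eq_zero (f := f) (f' := f') (hx i hi)
        (fun z _ => (hf z).continuousAt.continuousWithinAt)
        (by rw [h0 i (by omega), h0 (i + 1) (by omega)]) (fun z _ => hf z)
      exact ⟨c, fun _ => ⟨hc.1, hc.2, hc'⟩⟩
    · exact ⟨0, fun h => absurd h hi⟩
  choose y hy using this
  exact ⟨y, hy⟩

theorem aux_pos (n : ℕ) (w : ℕ → ℝ) (w0 : 0 < w 0) (hw : ∀ i < n, w i < w (i + 1)) :
    ∀ i ≤ n, 0 < w i := by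
  intro i
  induction i with
  | zero => intro _; exact w0
  | succ i ih => intro hi; exact (ih (by omega)).trans (hw i (by omega))

theorem aux_sparse (n : ℕ) : ∀ (a : ℕ → ℝ) (e : ℕ → ℕ) (w : ℕ → ℝ), StrictMono e →
    (∀ k ≤ n, a k ≠ 0) → 0 < w 0 → (∀ i < n, w i < w (i + 1)) →
    (∀ i ≤ n, ∑ k ∈ Finset.range (n + 1), a k * w i ^ e k = 0) → False := by
  induction n with
  | zero =>
    intro a e w he ha w0 hw h
    have := h 0 le_rfl
    simp [ha 0 le_rfl] at this
    exact w0.ne' this.1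
  | succ n ih =>
    intro a e w he ha w0 hw h
    have hpos := aux_pos (n + 1) w w0 hw
    obtain ⟨y, hy⟩ := aux_rolle (fun z => ∑ k ∈ Finset.range (n + 1 + 1), a k * z ^ (e k - e 0))
      (fun z => ∑ k ∈ Finset.range (n + 1 + 1), a k * (((e k - e 0 : ℕ) : ℝ) * z ^ (e k - e 0 - 1)))
      (fun z => HasDerivAt.fun_sum fun k _ => (hasDerivAt_pow _ z).const_mul (a k))
      (n + 1) w hw (by
        intro i hi
        have h1 := h i hi
        have h2 : w i ^ e 0 * ∑ k ∈ Finset.range (n + 1 + 1), a k * w i ^ (e k - e 0) = 0 := by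
          rw [← h1, Finset.mul_sum]
          refine Finset.sum_congr rfl fun k _ => ?_
          have : e k = e 0 + (e k - e 0) := by
            have := he.monotone (Nat.zero_le k); omega
          conv_rhs => rw [this, pow_add]
          ring
        exact (mul_eq_zero.1 h2).resolve_left (pow_pos (hpos i hi) _).ne')
    refine ih (fun k => a (k + 1) * ((e (k + 1) - e 0 : ℕ) : ℝ)) (fun k => e (k + 1) - e 0 - 1) y
      ?_ ?_ ?_ ?_ ?_
    · intro k l hkl
      have h1 := he (show k + 1 < l + 1 by omega)
      have h2 := he (show 0 < k + 1 by omega)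
      show e (k + 1) - e 0 - 1 < e (l + 1) - e 0 - 1
      omega
    · intro k hk
      have h2 := he (show 0 < k + 1 by omega)
      exact mul_ne_zero (ha _ (by omega)) (by norm_cast; omega)
    · exact w0.trans (hy 0 (by omega)).1
    · intro i hi
      exact (hy i (by omega)).2.1.trans (hy (i + 1) (by omega)).1
    · intro i hi
      have := (hy i (by omega)).2.2
      rw [Finset.sum_range_succ'] at this
      simp only [Nat.sub_self, Nat.cast_zero, zero_mul, mul_zero, add_zero] at this
      rw [← this]
      exact Finset.sum_congr rfl fun k _ => by ring

noncomputable def qq (d p : ℕ) (z : ℝ) : ℝ :=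
  ∑ k ∈ Finset.range (d + 1), (-1 : ℝ) ^ k * (d.choose k : ℝ) * z ^ p ^ k

theorem qq_succ (d p : ℕ) (z : ℝ) : qq (d + 1) p z = qq d p z - qq d p (z ^ p) := by
  unfold qq
  have h1 : ∀ k, (z ^ p) ^ p ^ k = z ^ p ^ (k + 1) := by
    intro k; rw [← pow_mul, pow_succ p, mul_comm]
  simp only [h1]
  rw [Finset.sum_range_succ']
  simp only [Nat.choose_succ_succ, Nat.cast_add, mul_add, add_mul, Finset.sum_add_distrib]
  have h2 : ∑ k ∈ Finset.range (d + 1), (-1 : ℝ) ^ k * (d.choose k : ℝ) * z ^ p ^ k =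
      ∑ k ∈ Finset.range (d + 1), (-1 : ℝ) ^ (k + 1) * (d.choose (k + 1) : ℝ) * z ^ p ^ (k + 1)
      + z := by
    have := Finset.sum_range_succ' (fun k => (-1 : ℝ) ^ k * (d.choose k : ℝ) * z ^ p ^ k) (d + 1)
    rw [Finset.sum_range_succ] at this
    simpa using this
  rw [h2]
  have h3 : ∑ k ∈ Finset.range (d + 1), (-1 : ℝ) ^ (k + 1) * (d.choose k : ℝ) * z ^ p ^ (k + 1) =
     - ∑ k ∈ Finset.range (d + 1), (-1 : ℝ) ^ k * (d.choose k : ℝ) * z ^ p ^ (k + 1) := by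
    rw [← Finset.sum_neg_distrib]
    exact Finset.sum_congr rfl fun k _ => by ring
  rw [h3]
  simp
  ring

noncomputable def zz (p : ℕ) (m : ℤ) : ℝ := Real.exp (-(p : ℝ) ^ (-m))

theorem zz_pow (p : ℕ) (hp : 2 ≤ p) (m : ℤ) : zz p m ^ p = zz p (m - 1) := by
  unfold zz
  have : (p : ℝ) ≠ 0 := by positivity
  rw [← Real.exp_nat_mul, show -(m - 1) = -m + 1 by ring, zpow_add_one₀ this]
  congr 1
  ring

theorem zz_mono (p : ℕ) (hp : 2 ≤ p) : StrictMono (zz p) := by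
  intro m n h
  unfold zz
  have h1 : (1 : ℝ) < p := by exact_mod_cast hp
  have := zpow_lt_zpow_right₀ h1 (show -n < -m by omega)
  exact Real.exp_lt_exp.2 (by linarith)

open Filter Topology in
theorem aux_zpow {x : ℝ} (h : 1 < x) : Tendsto (fun m : ℤ => x ^ m) atTop atTop := by
  refine tendsto_atTop_atTop_of_monotone (zpow_right_strictMono₀ h).monotone fun b => ?_
  obtain ⟨n, hn⟩ := pow_unbounded_of_one_lt b h
  exact ⟨n, by rw [zpow_natCast]; exact hn.le⟩

open Filter Topology in
theorem zz_top (p : ℕ) (hp : 2 ≤ p) : Tendsto (zz p) atTop (𝓝 1) := by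
  have h1 : (1 : ℝ) < p := by exact_mod_cast hp
  have h2 : Tendsto (fun m : ℤ => (p : ℝ) ^ (-m)) atTop (𝓝 0) := by
    have := (aux_zpow h1).inv_tendsto_atTop
    simp only [zpow_neg]
    exact this
  have := (Real.continuous_exp.tendsto _).comp h2.neg
  simp only [neg_zero, Real.exp_zero] at this
  exact this

open Filter Topology in
theorem zz_bot (p : ℕ) (hp : 2 ≤ p) : Tendsto (zz p) atBot (𝓝 0) := by
  have h1 : (1 : ℝ) < p := by exact_mod_cast hp
  have h2 : Tendsto (fun m : ℤ => (p : ℝ) ^ (-m)) atBot atTop :=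
    (aux_zpow h1).comp tendsto_neg_atBot_atTop
  exact Real.tendsto_exp_neg_atTop_nhds_zero.comp h2

open Filter Topology in
theorem aux_main (p : ℕ) (hp : 2 ≤ p) (d : ℕ) :
    Tendsto (fun m => qq (d + 1) p (zz p m)) atTop (𝓝 0) ∧
    Tendsto (fun m => qq (d + 1) p (zz p m)) atBot (𝓝 0) ∧
    AltN (fun m => qq (d + 1) p (zz p m)) d := by
  have hT : Tendsto (fun m : ℤ => m - 1) atTop atTop := tendsto_atTop_add_const_right _ (-1) tendsto_id
  have hB : Tendsto (fun m : ℤ => m - 1) atBot atBot := tendsto_atBot_add_const_right _ (-1) tendsto_id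
  induction d with
  | zero =>
    have e : ∀ m, qq (0 + 1) p (zz p m) = zz p m - zz p (m - 1) := by
      intro m
      rw [qq_succ, zz_pow p hp]
      simp [qq]
    simp only [e]
    refine ⟨?_, ?_, fun _ => 0, by simp, ?_⟩
    · simpa using (zz_top p hp).sub ((zz_top p hp).comp hT)
    · simpa using (zz_bot p hp).sub ((zz_bot p hp).comp hB)
    · intro i hi
      have : i = 0 := by omega
      subst this
      simpa using zz_mono p hp (show (-1 : ℤ) < 0 by norm_num)
  | succ d ih =>
    obtain ⟨h1, h2, h3⟩ := ih
    have e : ∀ m, qq (d + 1 + 1) p (zz p m) = qq (d + 1) p (zz p m) - qq (d + 1) p (zz p (m - 1)) := by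
      intro m
      rw [qq_succ, zz_pow p hp]
    simp only [e]
    refine ⟨?_, ?_, aux_alt _ _ h1 h2 h3⟩
    · simpa using h1.sub (h1.comp hT)
    · simpa using h2.sub (h2.comp hB)

theorem qq_cont (d p : ℕ) : Continuous (qq d p) := by
  unfold qq
  fun_prop

theorem qq_one (d p : ℕ) : qq (d + 1) p 1 = 0 := by
  rw [qq_succ]; simp

/-- `d+1` positive zeros of `q_{d+1}` -/
theorem aux_roots (p : ℕ) (hp : 2 ≤ p) (d : ℕ) :
    ∃ x : ℕ → ℝ, 0 < x 0 ∧ (∀ i < d, x i < x (i + 1)) ∧ ∀ i ≤ d, qq (d + 1) p (x i) = 0 := by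
  obtain ⟨-, -, m, hm, hs⟩ := aux_main p hp d
  have : ∀ i, ∃ x, i < d → zz p (m i) < x ∧ x < zz p (m (i + 1)) ∧ qq (d + 1) p x = 0 := by
    intro i
    by_cases hi : i < d
    · have k1 := hs i (by omega)
      have k2 := hs (i + 1) (by omega)
      have hlt := zz_mono p hp (hm i hi)
      have hc : ContinuousOn (fun z => (-1 : ℝ) ^ (i + 1) * qq (d + 1) p z)
          (Set.Icc (zz p (m i)) (zz p (m (i + 1)))) :=
        (continuous_const.mul (qq_cont _ _)).continuousOn
      obtain ⟨c, hc1, hc2⟩ := intermediate_value_Ioo hlt.le hc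
        (show (0 : ℝ) ∈ _ from ⟨by simp only [pow_succ]; linarith, k2⟩)
      refine ⟨c, fun _ => ⟨hc1.1, hc1.2, ?_⟩⟩
      simpa using hc2
    · exact ⟨0, fun h => absurd h hi⟩
  choose x hx using this
  have hpos : ∀ m, 0 < zz p m := fun m => Real.exp_pos _
  have hlt1 : ∀ m, zz p m < 1 := by
    intro m
    have : (0 : ℝ) < p := by positivity
    exact Real.exp_lt_one_iff.2 (neg_lt_zero.2 (zpow_pos this _))
  refine ⟨fun i => if i < d then x i else 1, ?_, ?_, ?_⟩
  · by_cases h : 0 < d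
    · simpa [h] using (hpos _).trans (hx 0 h).1
    · simp [h]
  · intro i hi
    by_cases h : i + 1 < d
    · simpa [hi, h] using (hx i hi).2.1.trans (hx (i + 1) h).1
    · simpa [hi, h] using (hx i hi).2.1.trans (hlt1 _)
  · intro i hi
    by_cases h : i < d
    · simpa [h] using (hx i h).2.2
    · simpa [h] using qq_one d p

theorem aux_uniq (p : ℕ) (hp : 2 ≤ p) (d : ℕ) (D : ℝ → ℝ)
    (hD : ∀ z, D z = ∑ k ∈ Finset.range (d + 1 + 1),
      ((-1 : ℝ) ^ k * ((d + 1).choose k : ℝ) * ((p ^ k : ℕ) : ℝ)) * z ^ (p ^ k - 1))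
    (hq : ∀ z, HasDerivAt (qq (d + 1) p) (D z) z)
    (r s s' : ℝ) (hr : ∀ z, 0 < z → qq (d + 1) p z = 0 → r ≤ z)
    (h0 : 0 < s) (hss : s < s') (hs' : s' < r) (h1 : D s = 0) (h2 : D s' = 0) : False := by
  obtain ⟨x, x0, hx, hz⟩ := aux_roots p hp d
  obtain ⟨y, hy⟩ := aux_rolle _ _ hq d x hx hz
  have hrx := hr _ x0 (hz 0 (by omega))
  refine aux_sparse (d + 1)
    (fun k => (-1 : ℝ) ^ k * ((d + 1).choose k : ℝ) * ((p ^ k : ℕ) : ℝ)) (fun k => p ^ k - 1)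
    (fun i => match i with | 0 => s | 1 => s' | i + 2 => y i) ?_ ?_ h0 ?_ ?_
  · intro k l hkl
    have := Nat.pow_lt_pow_right (show 1 < p by omega) hkl
    have := Nat.pow_pos (n := k) (show 0 < p by omega)
    show p ^ k - 1 < p ^ l - 1
    omega
  · intro k hk
    have := Nat.choose_pos hk
    have : (0 : ℝ) < p := by positivity
    positivity
  · intro i hi
    match i with
    | 0 => exact hss
    | 1 => exact (hs'.trans_le hrx).trans (hy 0 (by omega)).1
    | i + 2 => exact (hy i (by omega)).2.1.trans (hy (i + 1) (by omega)).1
  · intro i hi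
    match i with
    | 0 => rw [← h1, hD]
    | 1 => rw [← h2, hD]
    | i + 2 => rw [← (hy i (by omega)).2.2, hD]

/-- For all `d ≥ 1` and `p ≥ 2`, with
`q(z) = ∑_{k=0}^{d} (-1)^k C(d,k) z^{p^k}`: one has `q(1) = 0`, so the set of positive real
roots of `q` is nonempty and has a least element `r ∈ (0,1]`; and there exists a unique
`s ∈ (0, r)` with `q'(s) = 0`. -/
theorem statement_14 (d p : ℕ) (hd : 1 ≤ d) (hp : 2 ≤ p)
    (q : ℝ → ℝ)
    (hq : ∀ z : ℝ, q z =
        ∑ k ∈ Finset.range (d + 1), (-1 : ℝ) ^ k * (d.choose k : ℝ) * z ^ p ^ k) :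
    q 1 = 0 ∧
    ∃ r : ℝ, IsLeast {z : ℝ | 0 < z ∧ q z = 0} r ∧ r ≤ 1 ∧
      ∃! s : ℝ, s ∈ Set.Ioo 0 r ∧ deriv q s = 0 := by
  obtain ⟨d, rfl⟩ : ∃ e, d = e + 1 := ⟨d - 1, by omega⟩
  obtain rfl : q = qq (d + 1) p := funext hq
  clear hq hd
  have hpk : ∀ k, 0 < p ^ k := fun k => Nat.pow_pos (show 0 < p by omega)
  let D : ℝ → ℝ := fun z => ∑ k ∈ Finset.range (d + 1 + 1),
      ((-1 : ℝ) ^ k * ((d + 1).choose k : ℝ) * ((p ^ k : ℕ) : ℝ)) * z ^ (p ^ k - 1)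
  have hD : ∀ z, HasDerivAt (qq (d + 1) p) (D z) z := by
    intro z
    have := HasDerivAt.fun_sum (u := Finset.range (d + 1 + 1)) fun k _ =>
      (hasDerivAt_pow (p ^ k) z).const_mul ((-1 : ℝ) ^ k * ((d + 1).choose k : ℝ))
    simp only [← mul_assoc] at this
    exact this
  let g : ℝ → ℝ := fun z => ∑ k ∈ Finset.range (d + 1 + 1),
      ((-1 : ℝ) ^ k * ((d + 1).choose k : ℝ)) * z ^ (p ^ k - 1)
  have hg : ∀ z, qq (d + 1) p z = z * g z := by
    intro z
    simp only [g, qq, Finset.mul_sum]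
    refine Finset.sum_congr rfl fun k _ => ?_
    have : p ^ k = (p ^ k - 1) + 1 := by have := hpk k; omega
    conv_lhs => rw [this, pow_succ]
    ring
  have hgc : Continuous g := by fun_prop
  have hg0 : g 0 = 1 := by
    simp only [g]
    rw [Finset.sum_range_succ', Finset.sum_eq_zero]
    · simp
    · intro k _
      have : 1 < p ^ (k + 1) := Nat.one_lt_pow (by omega) (by omega)
      rw [zero_pow (by omega), mul_zero]
  have hq1 := qq_one d p
  have hg1 : g 1 = 0 := by have := hg 1; rw [hq1] at this; linarith
  have hK : IsCompact (Set.Icc (0 : ℝ) 1 ∩ g ⁻¹' {0}) :=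
    isCompact_Icc.inter_right (isClosed_singleton.preimage hgc)
  obtain ⟨r, ⟨⟨hr0, hr1⟩, hrg⟩, hrl⟩ := hK.exists_isLeast ⟨1, by simp [hg1]⟩
  have hrg : g r = 0 := hrg
  have hrpos : 0 < r := by
    rcases hr0.lt_or_eq with h | h
    · exact h
    · rw [← h, hg0] at hrg; norm_num at hrg
  have hleast : ∀ z, 0 < z → qq (d + 1) p z = 0 → r ≤ z := by
    intro z hz hz0
    rcases le_or_gt z 1 with h | h
    · refine hrl ⟨⟨hz.le, h⟩, ?_⟩
      rw [hg] at hz0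
      exact (mul_eq_zero.1 hz0).resolve_left hz.ne'
    · exact hr1.trans h.le
  have hqr : qq (d + 1) p r = 0 := by rw [hg, hrg, mul_zero]
  refine ⟨hq1, r, ⟨⟨hrpos, hqr⟩, fun z hz => hleast z hz.1 hz.2⟩, hr1, ?_⟩
  obtain ⟨s, hs, hs0⟩ := exists_hasDerivAt_eq_zero (f := qq (d + 1) p) (f' := D) hrpos
    (qq_cont _ _).continuousOn (by rw [hqr, hg, zero_mul]) (fun z _ => hD z)
  refine ⟨s, ⟨hs, by rw [(hD s).deriv, hs0]⟩, ?_⟩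
  rintro t ⟨ht, ht0⟩
  rw [(hD t).deriv] at ht0
  rcases lt_trichotomy t s with h | h | h
  · exact (aux_uniq p hp d D (fun _ => rfl) hD r t s hleast ht.1 h hs.2 ht0 hs0).elim
  · exact h
  · exact (aux_uniq p hp d D (fun _ => rfl) hD r s t hleast hs.1 h ht.2 hs0 ht0).elim
end

section
/- Fix integers d ≥ 1 and p ≥ 2, and for n ≥ 1 let T⁺_{d,p,n} denote the (finite) set of interchange maximal trees with n leaves. Then the formal power series w = ∑_{n ≥ 1} |T⁺_{d,p,n}| · x^n in ℚ⟦x⟧ satisfies the functional equation ∑_{k=0}^{d} (−1)^k · binom(d,k) · w^{p^k} = x. -/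
/-- A plane rooted full `p`-ary tree in which every internal node carries a label from
`{1, …, d}` (encoded as `Fin d`) and has exactly `p` ordered children (indexed by `Fin p`);
leaves are unlabelled. -/
inductive LabelledPTree (d p : ℕ) : Type
  | leaf : LabelledPTree d p
  | node : Fin d → (Fin p → LabelledPTree d p) → LabelledPTree d p

namespace LabelledPTree

/-- The number of leaves of a tree. -/
def leavesCount {d p : ℕ} : LabelledPTree d p → ℕ
  | leaf => 1
  | node _ f => ∑ i : Fin p, leavesCount (f i)

/-- `Blocked j T` means that every path from the root of `T` to each leaf of `T` passes
through an internal node of `T` labelled `j` (the root itself counts). -/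
def Blocked {d p : ℕ} (j : Fin d) : LabelledPTree d p → Prop
  | leaf => False
  | node i f => i = j ∨ ∀ k : Fin p, Blocked j (f k)

/-- A tree is interchange maximal if it has no subtree `S` (rooted at an internal node,
including the tree itself) whose root is labelled `i` and for which there exists some `j > i`
such that every path from the root of `S` to each leaf of `S` passes through an internal node
of `S` labelled `j`. -/
def IsInterchangeMaximal {d p : ℕ} : LabelledPTree d p → Prop
  | leaf => True
  | node i f =>
      (∀ k : Fin p, IsInterchangeMaximal (f k)) ∧ ¬ ∃ j : Fin d, i < j ∧ Blocked j (node i f)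

end LabelledPTree

namespace LabelledPTree

variable {d p : ℕ}

theorem leavesCount_pos (hp : 2 ≤ p) (T : LabelledPTree d p) : 0 < T.leavesCount := by
  induction T with
  | leaf => simp [leavesCount]
  | node i f ih =>
    simp only [leavesCount]
    exact Finset.sum_pos (fun k _ => ih k) ⟨⟨0, by omega⟩, Finset.mem_univ _⟩

theorem child_lt (hp : 2 ≤ p) (f : Fin p → LabelledPTree d p) (k : Fin p) :
    (f k).leavesCount < ∑ i, (f i).leavesCount := by
  have : Nontrivial (Fin p) := Fin.nontrivial_iff_two_le.2 hp
  obtain ⟨l, hl⟩ := exists_ne k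
  exact Finset.single_lt_sum (f := fun i => (f i).leavesCount) hl (Finset.mem_univ _) (Finset.mem_univ _) (leavesCount_pos hp _)
    (fun _ _ _ => Nat.zero_le _)

theorem finite_le (hp : 2 ≤ p) (n : ℕ) : {T : LabelledPTree d p | T.leavesCount ≤ n}.Finite := by
  induction n with
  | zero =>
    convert Set.finite_empty
    ext T
    have := leavesCount_pos hp T
    simp; omega
  | succ n ih =>
    have h1 : ({leaf} ∪ ⋃ i : Fin d, (node i) '' {f : Fin p → LabelledPTree d p |
        ∀ k, f k ∈ {T : LabelledPTree d p | T.leavesCount ≤ n}}).Finite :=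
      (Set.finite_singleton _).union (Set.finite_iUnion fun i =>
        (Set.Finite.pi' (fun _ => ih)).image _)
    refine h1.subset ?_
    intro T hT
    cases T with
    | leaf => left; rfl
    | node i f =>
      right
      refine Set.mem_iUnion.2 ⟨i, f, ?_, rfl⟩
      intro k
      have := child_lt hp f k
      simp only [Set.mem_ofPred_eq, leavesCount] at hT ⊢
      omega

theorem finite_tuple (hp : 2 ≤ p) (n : ℕ) (P : (Fin p → LabelledPTree d p) → Prop) :
    Finite {t : Fin p → LabelledPTree d p // ∑ k, (t k).leavesCount = n ∧ P t} := by
  refine Set.Finite.subset (Set.Finite.pi' (fun _ : Fin p => finite_le (d := d) hp n)) ?_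
  rintro t ⟨h, -⟩ k
  have := child_lt hp t k
  simp only [Set.mem_ofPred_eq]; omega

theorem finite_tree (hp : 2 ≤ p) (n : ℕ) (P : LabelledPTree d p → Prop) :
    Finite {T : LabelledPTree d p // T.leavesCount = n ∧ P T} := by
  refine Set.Finite.subset (finite_le (d := d) hp n) ?_
  rintro t ⟨h, -⟩
  exact h.le

/-- generating function of trees -/
noncomputable def gf (P : LabelledPTree d p → Prop) : PowerSeries ℚ :=
  PowerSeries.mk fun n => (Nat.card {T : LabelledPTree d p // T.leavesCount = n ∧ P T} : ℚ)

/-- generating function of tuples of trees -/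
noncomputable def gt (P : (Fin p → LabelledPTree d p) → Prop) : PowerSeries ℚ :=
  PowerSeries.mk fun n => (Nat.card {t : Fin p → LabelledPTree d p //
    ∑ k, (t k).leavesCount = n ∧ P t} : ℚ)

theorem gt_all (hp : 2 ≤ p) (P : LabelledPTree d p → Prop) :
    gt (fun t : Fin p → LabelledPTree d p => ∀ k, P (t k)) = gf P ^ p := by
  classical
  have h0 : gf P ^ p = ∏ _k : Fin p, gf P := by simp
  rw [h0]
  ext n
  rw [PowerSeries.coeff_prod]
  simp only [gt, gf, PowerSeries.coeff_mk]
  have := fun m => finite_tree hp m P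
  let e : {t : Fin p → LabelledPTree d p // ∑ k, (t k).leavesCount = n ∧ ∀ k, P (t k)} ≃
      Σ l : {l // l ∈ (Finset.univ : Finset (Fin p)).finsuppAntidiag n},
        ∀ k : Fin p, {T : LabelledPTree d p // T.leavesCount = l.1 k ∧ P T} :=
    { toFun := fun t => ⟨⟨Finsupp.equivFunOnFinite.symm fun k => (t.1 k).leavesCount, by
          rw [Finset.mem_finsuppAntidiag]; exact ⟨t.2.1, Finset.subset_univ _⟩⟩,
          fun k => ⟨t.1 k, rfl, t.2.2 k⟩⟩
      invFun := fun s => ⟨fun k => (s.2 k).1, by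
          exact (Finset.sum_congr rfl fun k _ => (s.2 k).2.1).trans
            (Finset.mem_finsuppAntidiag.1 s.1.2).1, fun k => (s.2 k).2.2⟩
      left_inv := fun t => rfl
      right_inv := by
        rintro ⟨⟨l, hl⟩, s⟩
        have h : l = Finsupp.equivFunOnFinite.symm fun k => (s k).1.leavesCount := by
          ext k; exact (s k).2.1.symm
        have key : ∀ (s' : Fin p → LabelledPTree d p)
            (h : l = Finsupp.equivFunOnFinite.symm fun k => (s' k).leavesCount)
            (h2 : ∀ k, (s' k).leavesCount = l k ∧ P (s' k)) (hl2),
            (⟨⟨Finsupp.equivFunOnFinite.symm fun k => (s' k).leavesCount, hl2⟩,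
              fun k => ⟨s' k, rfl, (h2 k).2⟩⟩ : Σ l : {l // l ∈
                (Finset.univ : Finset (Fin p)).finsuppAntidiag n},
              ∀ k : Fin p, {T : LabelledPTree d p // T.leavesCount = l.1 k ∧ P T}) =
              ⟨⟨l, hl⟩, fun k => ⟨s' k, h2 k⟩⟩ := by
          intro s' h h2 hl2
          subst h
          rfl
        exact key (fun k => (s k).1) h (fun k => (s k).2) _ }
  rw [Nat.card_congr e, Nat.card_sigma]
  simp only [Nat.card_pi]
  push_cast
  exact Finset.sum_coe_sort ((Finset.univ : Finset (Fin p)).finsuppAntidiag n)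
    (fun l => ∏ k, (Nat.card {T : LabelledPTree d p // T.leavesCount = l k ∧ P T} : ℚ))

theorem gt_split (hp : 2 ≤ p) (P R : (Fin p → LabelledPTree d p) → Prop) :
    gt P = gt (fun t => P t ∧ R t) + gt (fun t => P t ∧ ¬ R t) := by
  classical
  ext n
  simp only [gt, PowerSeries.coeff_mk, map_add]
  have := fun P : (Fin p → LabelledPTree d p) → Prop => finite_tuple hp n P
  rw [← Nat.cast_add, ← Nat.card_sum]
  congr 1
  refine Nat.card_congr ?_
  exact
    { toFun := fun t => if h : R t.1 then Sum.inl ⟨t.1, t.2.1, t.2.2, h⟩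
        else Sum.inr ⟨t.1, t.2.1, t.2.2, h⟩
      invFun := Sum.elim (fun t => ⟨t.1, t.2.1, t.2.2.1⟩) (fun t => ⟨t.1, t.2.1, t.2.2.1⟩)
      left_inv := by
        intro t
        by_cases h : R t.1 <;> simp [h]
      right_inv := by
        rintro (t | t)
        · simp [t.2.2.2]
        · simp [t.2.2.2] }

theorem gt_false (P : (Fin p → LabelledPTree d p) → Prop) (h : ∀ t, ¬ P t) : gt P = 0 := by
  ext n
  have : IsEmpty {t : Fin p → LabelledPTree d p // ∑ k, (t k).leavesCount = n ∧ P t} :=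
    ⟨fun t => h _ t.2.2⟩
  simp [gt]

theorem gf_eq (hp : 2 ≤ p) (P : LabelledPTree d p → Prop) [Decidable (P leaf)] :
    gf P = (if P leaf then PowerSeries.X else 0) + ∑ i : Fin d, gt (fun t => P (node i t)) := by
  ext n
  have := fun P : (Fin p → LabelledPTree d p) → Prop => finite_tuple hp n P
  have e : {T : LabelledPTree d p // T.leavesCount = n ∧ P T} ≃
      {_u : Unit // 1 = n ∧ P leaf} ⊕
        Σ i : Fin d, {t : Fin p → LabelledPTree d p //
          ∑ k, (t k).leavesCount = n ∧ P (node i t)} :=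
    { toFun := fun T => match T with
        | ⟨leaf, h⟩ => Sum.inl ⟨(), h⟩
        | ⟨node i t, h⟩ => Sum.inr ⟨i, t, h⟩
      invFun := fun s => match s with
        | Sum.inl u => ⟨leaf, u.2⟩
        | Sum.inr s => ⟨node s.1 s.2.1, s.2.2⟩
      left_inv := by
        rintro ⟨_ | _, h⟩ <;> rfl
      right_inv := by
        rintro (u | s) <;> rfl }
  simp only [gf, gt, PowerSeries.coeff_mk, map_add, map_sum]
  rw [Nat.card_congr e, Nat.card_sum, Nat.card_sigma]
  push_cast
  congr 1
  by_cases hP : P leaf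
  · by_cases hn : n = 1
    · subst hn
      simp [hP]
    · simp [hP, PowerSeries.coeff_X, hn, Ne.symm hn]
  · simp [hP]

/-- interchange maximal trees blocked by all of `A` -/
noncomputable def W (p : ℕ) (A : Finset (Fin d)) : PowerSeries ℚ :=
  gf (fun T : LabelledPTree d p => T.IsInterchangeMaximal ∧ ∀ j ∈ A, Blocked j T)

/-- tuples -/
noncomputable def Q (p : ℕ) (A : Finset (Fin d)) (i : ℕ) : PowerSeries ℚ :=
  gt (fun t : Fin p → LabelledPTree d p =>
    (∀ k, (t k).IsInterchangeMaximal ∧ ∀ j ∈ A, Blocked j (t k)) ∧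
    ∀ j : Fin d, i ≤ j.val → ¬ ∀ k, Blocked j (t k))

theorem Q_top (hp : 2 ≤ p) (A : Finset (Fin d)) : Q p A d = W p A ^ p := by
  rw [W, ← gt_all hp, Q]
  congr 1
  funext t
  apply propext
  constructor
  · exact fun h => h.1
  · exact fun h => ⟨h, fun j hj => absurd j.2 (by omega)⟩

theorem Q_step (hp : 2 ≤ p) (A : Finset (Fin d)) (i : Fin d) :
    Q p A (i.val + 1) = Q p (insert i A) (i.val + 1) + Q p A i.val := by
  rw [Q, gt_split hp _ (fun t => ∀ k, Blocked i (t k)), Q, Q]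
  congr 2
  · funext t
    apply propext
    simp only [Finset.mem_insert, forall_eq_or_imp]
    constructor
    · rintro ⟨⟨h1, h2⟩, h3⟩
      exact ⟨fun k => ⟨(h1 k).1, h3 k, (h1 k).2⟩, h2⟩
    · rintro ⟨h1, h2⟩
      exact ⟨⟨fun k => ⟨(h1 k).1, (h1 k).2.2⟩, h2⟩, fun k => (h1 k).2.1⟩
  · funext t
    apply propext
    constructor
    · rintro ⟨⟨h1, h2⟩, h3⟩
      refine ⟨h1, fun j hj => ?_⟩
      rcases hj.eq_or_lt with h | h
      · obtain rfl : i = j := Fin.ext h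
        exact h3
      · exact h2 j h
    · rintro ⟨h1, h2⟩
      exact ⟨⟨h1, fun j hj => h2 j (by omega)⟩, h2 i le_rfl⟩

open Classical in
theorem W_eq (hp : 2 ≤ p) (A : Finset (Fin d)) :
    W p A = (if A = ∅ then PowerSeries.X else 0) +
      ∑ i : Fin d, if ∃ j ∈ A, i < j then 0 else Q p (A.erase i) (i.val + 1) := by
  rw [W, gf_eq hp]
  congr 1
  · simp only [IsInterchangeMaximal, Blocked, true_and]
    congr 1
    simp [Finset.eq_empty_iff_forall_notMem]
  · refine Finset.sum_congr rfl fun i _ => ?_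
    split_ifs with h
    · obtain ⟨j, hj, hij⟩ := h
      refine gt_false _ fun t ht => ?_
      exact ht.1.2 ⟨j, hij, ht.2 j hj⟩
    · push Not at h
      rw [Q]
      congr 1
      funext t
      apply propext
      simp only [IsInterchangeMaximal, Blocked, Finset.mem_erase]
      constructor
      · rintro ⟨⟨h1, h2⟩, h3⟩
        refine ⟨fun k => ⟨h1 k, fun j hj => ?_⟩, fun j hj hb => h2 ⟨j, ?_, Or.inr hb⟩⟩
        · exact ((h3 j hj.2).resolve_left (Ne.symm hj.1)) k
        · exact Fin.lt_def.2 (by omega)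
      · rintro ⟨h1, h2⟩
        refine ⟨⟨fun k => (h1 k).1, ?_⟩, fun j hj => ?_⟩
        · rintro ⟨j, hj, hb⟩
          exact h2 j (Fin.lt_def.1 hj) (hb.resolve_left (ne_of_lt hj))
        · by_cases hij : i = j
          · exact Or.inl hij
          · exact Or.inr fun k => (h1 k).2 j ⟨Ne.symm hij, hj⟩

theorem X_dvd_W (hp : 2 ≤ p) (A : Finset (Fin d)) : PowerSeries.X ∣ W p A := by
  rw [PowerSeries.X_dvd_iff, ← PowerSeries.coeff_zero_eq_constantCoeff_apply]
  simp only [W, gf, PowerSeries.coeff_mk]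
  have : IsEmpty {T : LabelledPTree d p // T.leavesCount = 0 ∧
      (T.IsInterchangeMaximal ∧ ∀ j ∈ A, Blocked j T)} :=
    ⟨fun T => absurd T.2.1 (leavesCount_pos hp _).ne'⟩
  simp

/-- iterated differences -/
noncomputable def q (u : ℕ → PowerSeries ℚ) : ℕ → ℕ → PowerSeries ℚ
  | 0, k => u k
  | r + 1, k => q u r k - q u r (k + 1)

theorem q_sum (u : ℕ → PowerSeries ℚ) (r k : ℕ) :
    q u r k = ∑ s ∈ Finset.range (r + 1), (r.choose s : PowerSeries ℚ) * ((-1) ^ s * u (k + s)) := by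
  induction r generalizing k with
  | zero => simp [q]
  | succ r ih =>
    rw [q, ih, ih, Finset.sum_choose_succ_mul (fun s _ => (-1) ^ s * u (k + s)) r, sub_eq_add_neg,
      ← Finset.sum_neg_distrib]
    congr 1
    refine Finset.sum_congr rfl fun s _ => ?_
    rw [show k + 1 + s = k + (s + 1) by ring]
    ring

theorem q_tel (u : ℕ → PowerSeries ℚ) (k D : ℕ) :
    ∑ r ∈ Finset.range D, q u r (k + 1) = q u 0 k - q u D k := by
  induction D with
  | zero => simp
  | succ D ih => rw [Finset.sum_range_succ, ih]; simp only [q]; ring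

theorem q_tel2 (u : ℕ → PowerSeries ℚ) (k R D : ℕ) (h : R < D) :
    ∑ r ∈ Finset.range D, (if r < R then q u r (k + 1) else if r = R then q u R k else 0)
      = u k := by
  induction D, h using Nat.le_induction with
  | base =>
    rw [Finset.sum_range_succ, Finset.sum_congr rfl (g := fun r => q u r (k + 1)), q_tel]
    · simp [q]
    · intro r hr
      rw [if_pos (Finset.mem_range.1 hr)]
  | succ D hD ih =>
    rw [Finset.sum_range_succ, ih, if_neg (by omega), if_neg (by omega), add_zero]

theorem dvd_pow_sub (hp : 2 ≤ p) (n : ℕ) (f g : PowerSeries ℚ) (hf : PowerSeries.X ∣ f)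
    (hg : PowerSeries.X ∣ g) (h : PowerSeries.X ^ n ∣ f - g) :
    PowerSeries.X ^ (n + 1) ∣ f ^ p - g ^ p := by
  obtain ⟨m, rfl⟩ : ∃ m, p = m + 1 + 1 := ⟨p - 2, by omega⟩
  have : f ^ (m + 1 + 1) - g ^ (m + 1 + 1)
      = (f ^ (m + 1) - g ^ (m + 1)) * f + (f - g) * (g ^ m * g) := by ring
  rw [this, pow_succ]
  exact dvd_add (mul_dvd_mul (h.trans (sub_dvd_pow_sub_pow _ _ _)) hf)
    (mul_dvd_mul h (hg.mul_left _))

theorem Q_approx (hp : 2 ≤ p) (w : PowerSeries ℚ) (hw : PowerSeries.X ∣ w) (n : ℕ)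
    (H : ∀ A : Finset (Fin d), PowerSeries.X ^ n ∣ W p A - w ^ p ^ A.card)
    (r : ℕ) : ∀ i : ℕ, i + r = d → ∀ A : Finset (Fin d), (∀ j ∈ A, j.val < i) →
      PowerSeries.X ^ (n + 1) ∣ Q p A i - q (fun k => w ^ p ^ k) r (A.card + 1) := by
  induction r with
  | zero =>
    intro i hi A _
    obtain rfl : i = d := by omega
    rw [Q_top hp, q, pow_succ p, pow_mul]
    exact dvd_pow_sub hp n _ _ (X_dvd_W hp A) (dvd_pow hw (pow_pos (by omega) _).ne') (H A)
  | succ r ih =>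
    intro i hi A hA
    let i' : Fin d := ⟨i, by omega⟩
    have h1 := ih (i + 1) (by omega) A (fun j hj => (hA j hj).trans (Nat.lt_succ_self _))
    have h2 := ih (i + 1) (by omega) (insert i' A) (by
      intro j hj
      rcases Finset.mem_insert.1 hj with rfl | hj
      · exact Nat.lt_succ_self _
      · exact (hA j hj).trans (Nat.lt_succ_self _))
    have hni : i' ∉ A := fun h => absurd (hA _ h) (lt_irrefl _)
    rw [Finset.card_insert_of_notMem hni] at h2
    have h3 : Q p A (i + 1) = Q p (insert i' A) (i + 1) + Q p A i := Q_step hp A i'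
    have : Q p A i - q (fun k => w ^ p ^ k) (r + 1) (A.card + 1) =
      (Q p A (i + 1) - q (fun k => w ^ p ^ k) r (A.card + 1)) -
      (Q p (insert i' A) (i + 1) - q (fun k => w ^ p ^ k) r (A.card + 1 + 1)) := by
      rw [h3, q]; ring
    rw [this]
    exact dvd_sub h1 h2

theorem W_approx (hp : 2 ≤ p) (n : ℕ) :
    ∀ A : Finset (Fin d), PowerSeries.X ^ n ∣ W p A - W p (∅ : Finset (Fin d)) ^ p ^ A.card := by
  classical
  induction n with
  | zero => simp
  | succ n H =>
    intro A
    have hQ := Q_approx hp _ (X_dvd_W hp _) n H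
    set u : ℕ → PowerSeries ℚ := fun k => W p (∅ : Finset (Fin d)) ^ p ^ k with hu
    rcases A.eq_empty_or_nonempty with rfl | hA
    · simp
    set m := A.max' hA with hm
    have hmA : m ∈ A := A.max'_mem hA
    have hle : ∀ j ∈ A, j ≤ m := fun j hj => A.le_max' j hj
    have hmd := m.2
    have e : u A.card = ∑ i : Fin d, (if d - 1 - i.val < d - 1 - m.val then
        q u (d - 1 - i.val) (A.card + 1)
        else if d - 1 - i.val = d - 1 - m.val then q u (d - 1 - m.val) A.card else 0) := by
      rw [Fin.sum_univ_eq_sum_range (fun i => if d - 1 - i < d - 1 - m.val then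
        q u (d - 1 - i) (A.card + 1)
        else if d - 1 - i = d - 1 - m.val then q u (d - 1 - m.val) A.card else 0),
        Finset.sum_range_reflect (fun r => if r < d - 1 - m.val then q u r (A.card + 1)
        else if r = d - 1 - m.val then q u (d - 1 - m.val) A.card else 0), q_tel2]
      omega
    change _ ∣ _ - u A.card
    rw [e, W_eq hp A, if_neg hA.ne_empty, zero_add, ← Finset.sum_sub_distrib]
    refine Finset.dvd_sum fun i _ => ?_
    have hid := i.2
    rcases lt_trichotomy i m with h | h | h
    · have h' := Fin.lt_def.1 h
      rw [if_pos ⟨m, hmA, h⟩, if_neg (by omega), if_neg (by omega)]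
      simp
    · rw [h, if_neg (by rintro ⟨j, hj, hlt⟩; exact absurd (hle j hj) (not_le.2 hlt)),
        if_neg (by omega), if_pos rfl]
      have := hQ (d - 1 - m.val) (m.val + 1) (by omega) (A.erase m) (by
        intro j hj
        have := Fin.le_def.1 (hle j (Finset.mem_of_mem_erase hj))
        omega)
      rwa [Finset.card_erase_add_one hmA] at this
    · have h' := Fin.lt_def.1 h
      have hiA : i ∉ A := fun hi => absurd (hle i hi) (not_le.2 h)
      rw [if_neg (by rintro ⟨j, hj, hlt⟩; exact absurd (hle j hj) (not_le.2 (h.trans hlt))),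
        if_pos (by omega), Finset.erase_eq_of_notMem hiA]
      refine hQ (d - 1 - i.val) (i.val + 1) (by omega) A ?_
      intro j hj
      have := Fin.le_def.1 (hle j hj)
      omega

theorem eq_of_dvd (f g : PowerSeries ℚ) (h : ∀ n, PowerSeries.X ^ n ∣ f - g) : f = g := by
  rw [← sub_eq_zero]
  ext n
  simpa using PowerSeries.X_pow_dvd_iff.1 (h (n + 1)) n (Nat.lt_succ_self n)

theorem main (hp : 2 ≤ p) :
    q (fun k => W p (∅ : Finset (Fin d)) ^ p ^ k) d 0 = PowerSeries.X := by
  classical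
  have hQ : ∀ i : Fin d, Q p (∅ : Finset (Fin d)) (i.val + 1) =
      q (fun k => W p (∅ : Finset (Fin d)) ^ p ^ k) (d - 1 - i.val) (0 + 1) := by
    intro i
    have := i.2
    refine eq_of_dvd _ _ fun n => (pow_dvd_pow _ (Nat.le_succ n)).trans ?_
    exact Q_approx hp _ (X_dvd_W hp _) n (W_approx hp n) (d - 1 - i.val) (i.val + 1) (by omega) ∅
      (by simp)
  have h := W_eq hp (∅ : Finset (Fin d))
  simp only [Finset.notMem_empty, false_and, exists_false, if_false, if_true,
    Finset.erase_empty] at h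
  rw [Finset.sum_congr rfl fun i _ => hQ i,
    Fin.sum_univ_eq_sum_range (fun i => q (fun k => W p (∅ : Finset (Fin d)) ^ p ^ k)
      (d - 1 - i) (0 + 1)),
    Finset.sum_range_reflect (fun r => q (fun k => W p (∅ : Finset (Fin d)) ^ p ^ k) r (0 + 1)),
    q_tel] at h
  have h0 : q (fun k => W p (∅ : Finset (Fin d)) ^ p ^ k) 0 0 = W p (∅ : Finset (Fin d)) := by
    simp [q]
  rw [h0] at h
  linear_combination h

end LabelledPTree

/-- Fix `d ≥ 1` and `p ≥ 2`, and for `n ≥ 1` let `T⁺_{d,p,n}` be the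
(finite) set of interchange maximal trees with `n` leaves.  Then the formal power series
`w = ∑_{n ≥ 1} |T⁺_{d,p,n}| xⁿ ∈ ℚ⟦x⟧` satisfies the functional equation
`∑_{k=0}^{d} (-1)^k C(d,k) w^{p^k} = x`. -/
theorem statement_16 (d p : ℕ) (hd : 1 ≤ d) (hp : 2 ≤ p)
    (w : PowerSeries ℚ)
    (hw : ∀ n : ℕ, PowerSeries.coeff n w =
      if n = 0 then 0
      else (Nat.card {T : LabelledPTree d p //
        T.leavesCount = n ∧ T.IsInterchangeMaximal} : ℚ)) :
    ∑ k ∈ Finset.range (d + 1),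
      (-1 : PowerSeries ℚ) ^ k * (d.choose k : PowerSeries ℚ) * w ^ p ^ k
      = PowerSeries.X := by
  have hW : w = LabelledPTree.W p (∅ : Finset (Fin d)) := by
    ext n
    rw [hw]
    split_ifs with h
    · subst h
      have := LabelledPTree.X_dvd_W hp (∅ : Finset (Fin d))
      rw [PowerSeries.X_dvd_iff, ← PowerSeries.coeff_zero_eq_constantCoeff_apply] at this
      exact this.symm
    · simp [LabelledPTree.W, LabelledPTree.gf]
  rw [← LabelledPTree.main (d := d) hp, LabelledPTree.q_sum, hW]
  refine Finset.sum_congr rfl fun k _ => ?_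
  rw [zero_add]
  ring
end
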